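/- arXiv:1602.03586 — 5 statements merged into one kernel-verified Lean document; each statement's English description precedes it below -/
import Mathlib

section
/- Let s ≥ 2 be an integer and let f : Z_s × Z_s → Z_s be a semi-perfect function. Then for every z ∈ Z_s, f^{−1}(z) = L(f,z) × R(f,z), and moreover |L(f,z)| · |R(f,z)| = s. -/
open Finset

/-- Base-`s` Shannon entropy of `g(U)` where `U` is distributed on the finite type
`α` with probability mass function `q`. -/
noncomputable def pEnt (s : ℕ) {α β : Type} [Fintype α] [DecidableEq β] [Fintype β]
    (q : α → ℝ) (g : α → β) : ℝ :=
  -∑ y : β, (∑ x ∈ Finset.univ.filter fun x => g x = y, q x) *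
      Real.logb s (∑ x ∈ Finset.univ.filter fun x => g x = y, q x)

/-- The conditional mutual information `I(U₁; U₂ | f(U))` (base `s`), where the pair
`U = (U₁, U₂)` has joint probability mass function `q` on `Z_s × Z_s`, computed via
`I(A;B|C) = H(A,C) + H(B,C) − H(A,B,C) − H(C)`. -/
noncomputable def condMI (s : ℕ) (f : Fin s × Fin s → Fin s)
    (q : Fin s × Fin s → ℝ) : ℝ :=
  pEnt s q (fun u => (u.1, f u)) + pEnt s q (fun u => (u.2, f u))
    - pEnt s q (fun u => (u.1, u.2, f u)) - pEnt s q f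

/-- The uniform probability mass function on `Z_s × Z_s`. -/
noncomputable def unifPair (s : ℕ) : Fin s × Fin s → ℝ := fun _ => 1 / (s ^ 2 : ℝ)

/-- A function `f : Z_s × Z_s → Z_s` is flat if every fibre has exactly `s` elements. -/
def IsFlat (s : ℕ) (f : Fin s × Fin s → Fin s) : Prop :=
  ∀ z : Fin s, (Finset.univ.filter fun u => f u = z).card = s

/-- A function `f : Z_s × Z_s → Z_s` is semi-perfect if it is flat and, for
`U = (U₁,U₂)` uniform on `Z_s × Z_s`, `I(U₁; U₂ | f(U)) = 0`. -/
def IsSemiPerfect (s : ℕ) (f : Fin s × Fin s → Fin s) : Prop :=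
  IsFlat s f ∧ condMI s f (unifPair s) = 0

/-- `L(f,z) = { x : f(x,y) = z for some y }`. -/
def Lset (s : ℕ) (f : Fin s × Fin s → Fin s) (z : Fin s) : Finset (Fin s) :=
  Finset.univ.filter fun x => ∃ y, f (x, y) = z

/-- `R(f,z) = { y : f(x,y) = z for some x }`. -/
def Rset (s : ℕ) (f : Fin s × Fin s → Fin s) (z : Fin s) : Finset (Fin s) :=
  Finset.univ.filter fun y => ∃ x, f (x, y) = z

/-!
`I(X; Y | Z)` is the relative entropy of the joint distribution of `(X, Y, Z)` with respect to
`p(x, z) p(y, z) / p(z)`, so by the equality case of Gibbs' inequality it vanishes only if the two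
agree. For `Z = f (X, Y)` with `(X, Y)` of full support, `x ∈ L(f, z)` and `y ∈ R(f, z)` give
`p(x, z) p(y, z) > 0`, hence `(x, y, z)` has positive probability, which forces `f (x, y) = z`.
-/

theorem mul_klFun_div {p q : ℝ} (h : q = 0 → p = 0) :
    q * InformationTheory.klFun (p / q) = p * Real.log (p / q) + q - p := by
  rcases eq_or_ne q 0 with rfl | hq
  · simp [h rfl]
  · rw [InformationTheory.klFun_apply]
    field_simp

theorem eq_of_sum_mul_log_div_nonpos {ι : Type*} {t : Finset ι} {p q : ι → ℝ}
    (hp : ∀ i ∈ t, 0 ≤ p i) (hq : ∀ i ∈ t, 0 ≤ q i) (hpq : ∀ i ∈ t, q i = 0 → p i = 0)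
    (hsum : ∑ i ∈ t, q i ≤ ∑ i ∈ t, p i) (h : ∑ i ∈ t, p i * Real.log (p i / q i) ≤ 0) :
    ∀ i ∈ t, p i = q i := by
  have hnonneg : ∀ i ∈ t, 0 ≤ q i * InformationTheory.klFun (p i / q i) := fun i hi =>
    mul_nonneg (hq i hi) (InformationTheory.klFun_nonneg (div_nonneg (hp i hi) (hq i hi)))
  have hle : ∑ i ∈ t, q i * InformationTheory.klFun (p i / q i) ≤ 0 := by
    rw [sum_congr rfl fun i hi => mul_klFun_div (hpq i hi), sum_sub_distrib, sum_add_distrib]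
    linarith
  intro i hi
  have hzero := (sum_eq_zero_iff_of_nonneg hnonneg).1 (hle.antisymm (sum_nonneg hnonneg)) i hi
  rcases eq_or_ne (q i) 0 with hqi | hqi
  · rw [hpq i hi hqi, hqi]
  · have hkl := (mul_eq_zero.1 hzero).resolve_left hqi
    rw [InformationTheory.klFun_eq_zero_iff (div_nonneg (hp i hi) (hq i hi))] at hkl
    exact eq_of_div_eq_one hkl

section Marginal

variable {Ω α β : Type*} [Fintype Ω] [DecidableEq α] [DecidableEq β]

/-- The mass function of `g(U)` when `U` has mass function `q`; the total mass of `q` is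
arbitrary. -/
def marginal (q : Ω → ℝ) (g : Ω → α) (a : α) : ℝ :=
  ∑ u with g u = a, q u

theorem marginal_nonneg {q : Ω → ℝ} (hq : 0 ≤ q) (g : Ω → α) (a : α) : 0 ≤ marginal q g a :=
  sum_nonneg fun u _ => hq u

theorem marginal_apply_pos {q : Ω → ℝ} (hq : 0 ≤ q) (g : Ω → α) {u : Ω} (hu : 0 < q u) :
    0 < marginal q g (g u) :=
  hu.trans_le (single_le_sum (fun v _ => hq v) (by simp))

theorem exists_apply_eq_of_marginal_ne_zero {q : Ω → ℝ} {g : Ω → α} {a : α}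
    (h : marginal q g a ≠ 0) : ∃ u, g u = a := by
  obtain ⟨u, hu, -⟩ := exists_ne_zero_of_sum_ne_zero h
  exact ⟨u, by simpa using hu⟩

theorem marginal_le_marginal_comp {q : Ω → ℝ} (hq : 0 ≤ q) (g : Ω → α) (φ : α → β) (a : α) :
    marginal q g a ≤ marginal q (fun u => φ (g u)) (φ a) :=
  sum_le_sum_of_subset_of_nonneg (fun u hu => by simp_all) fun u _ _ => hq u

theorem sum_marginal_mul [Fintype α] (q : Ω → ℝ) (g : Ω → α) (φ : α → ℝ) :
    ∑ a, marginal q g a * φ a = ∑ u, q u * φ (g u) := by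
  rw [← sum_fiberwise univ g fun u => q u * φ (g u)]
  refine sum_congr rfl fun a _ => ?_
  rw [marginal, sum_mul]
  exact sum_congr rfl fun u hu => by rw [(mem_filter.1 hu).2]

theorem sum_marginal [Fintype α] (q : Ω → ℝ) (g : Ω → α) : ∑ a, marginal q g a = ∑ u, q u :=
  sum_fiberwise univ g q

theorem sum_marginal_prodMk [Fintype α] (q : Ω → ℝ) (X : Ω → α) (Z : Ω → β) (z : β) :
    ∑ x, marginal q (fun u => (X u, Z u)) (x, z) = marginal q Z z := by
  rw [marginal, ← sum_fiberwise _ X]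
  refine sum_congr rfl fun x _ => ?_
  rw [marginal, filter_filter]
  simp only [Prod.mk.injEq, and_comm]

end Marginal

section CondProduct

variable {Ω α β γ : Type*} [Fintype Ω] [DecidableEq α] [DecidableEq β] [DecidableEq γ]

/-- The mass function `(x, y, z) ↦ p(x, z) p(y, z) / p(z)` under which `X` and `Y` are
conditionally independent given `Z`, with the same marginals `(X, Z)` and `(Y, Z)` as under `q`.
It takes the value `0` where `p(z) = 0`. -/
noncomputable def condProduct (q : Ω → ℝ) (X : Ω → α) (Y : Ω → β) (Z : Ω → γ)
    (t : α × β × γ) : ℝ :=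
  marginal q (fun u => (X u, Z u)) (t.1, t.2.2) * marginal q (fun u => (Y u, Z u)) t.2 /
    marginal q Z t.2.2

theorem condProduct_nonneg {q : Ω → ℝ} (hq : 0 ≤ q) (X : Ω → α) (Y : Ω → β) (Z : Ω → γ)
    (t : α × β × γ) : 0 ≤ condProduct q X Y Z t :=
  div_nonneg (mul_nonneg (marginal_nonneg hq _ _) (marginal_nonneg hq _ _))
    (marginal_nonneg hq _ _)

theorem condProduct_pos {q : Ω → ℝ} (hq : 0 ≤ q) {X : Ω → α} {Y : Ω → β} {Z : Ω → γ}
    {u v : Ω} (hu : 0 < q u) (hv : 0 < q v) (huv : Z u = Z v) :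
    0 < condProduct q X Y Z (X u, Y v, Z v) := by
  have hxz := marginal_apply_pos hq (fun w => (X w, Z w)) hu
  rw [huv] at hxz
  exact div_pos (mul_pos hxz (marginal_apply_pos hq (fun w => (Y w, Z w)) hv))
    (marginal_apply_pos hq Z hv)

theorem marginal_eq_zero_of_condProduct_eq_zero {q : Ω → ℝ} (hq : 0 ≤ q) {X : Ω → α}
    {Y : Ω → β} {Z : Ω → γ} {t : α × β × γ} (h : condProduct q X Y Z t = 0) :
    marginal q (fun u => (X u, Y u, Z u)) t = 0 := by
  by_contra hne
  have hpos := (marginal_nonneg hq (fun u => (X u, Y u, Z u)) t).lt_of_ne' hne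
  have hxz := marginal_le_marginal_comp hq (fun u => (X u, Y u, Z u)) (fun t => (t.1, t.2.2)) t
  have hyz := marginal_le_marginal_comp hq (fun u => (X u, Y u, Z u)) (fun t => t.2) t
  have hz := marginal_le_marginal_comp hq (fun u => (X u, Y u, Z u)) (fun t => t.2.2) t
  exact (div_pos (mul_pos (hpos.trans_le hxz) (hpos.trans_le hyz)) (hpos.trans_le hz)).ne' h

theorem sum_condProduct [Fintype α] [Fintype β] [Fintype γ] (q : Ω → ℝ) (X : Ω → α) (Y : Ω → β)
    (Z : Ω → γ) : ∑ t, condProduct q X Y Z t = ∑ u, q u := by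
  calc ∑ t, condProduct q X Y Z t
    _ = ∑ z, ∑ x, ∑ y, condProduct q X Y Z (x, y, z) := by
        simp only [Fintype.sum_prod_type]
        rw [sum_comm_cycle]
    _ = ∑ z, marginal q Z z * marginal q Z z / marginal q Z z := by
        simp only [condProduct, ← sum_div, ← sum_mul_sum, sum_marginal_prodMk]
    _ = ∑ u, q u := by simp only [mul_self_div_self, sum_marginal]

end CondProduct

section CondMutualInfo

variable {Ω α β γ : Type} [Fintype Ω] [Fintype α] [Fintype β] [Fintype γ]
  [DecidableEq α] [DecidableEq β] [DecidableEq γ]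

theorem pEnt_eq_neg_sum (b : ℕ) (q : Ω → ℝ) (g : Ω → α) :
    pEnt b q g = -∑ u, q u * Real.logb b (marginal q g (g u)) :=
  congrArg Neg.neg (sum_marginal_mul q g fun a => Real.logb b (marginal q g a))

/-- The conditional mutual information `I(X; Y | Z)` in base `b` of arbitrary functions `X`, `Y`,
`Z` on a finite space with mass function `q`; `condMI` is the case of the two coordinates
and `f`. -/
noncomputable def condMutualInfo (b : ℕ) (q : Ω → ℝ) (X : Ω → α) (Y : Ω → β) (Z : Ω → γ) : ℝ :=
  pEnt b q (fun u => (X u, Z u)) + pEnt b q (fun u => (Y u, Z u))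
    - pEnt b q (fun u => (X u, Y u, Z u)) - pEnt b q Z

theorem condMutualInfo_eq_sum (b : ℕ) {q : Ω → ℝ} (hq : 0 ≤ q) (X : Ω → α) (Y : Ω → β)
    (Z : Ω → γ) :
    condMutualInfo b q X Y Z = ∑ t, marginal q (fun u => (X u, Y u, Z u)) t *
      Real.logb b (marginal q (fun u => (X u, Y u, Z u)) t / condProduct q X Y Z t) := by
  rw [sum_marginal_mul]
  simp only [condMutualInfo, pEnt_eq_neg_sum, ← sum_neg_distrib, ← sum_add_distrib,
    ← sum_sub_distrib]
  refine sum_congr rfl fun u _ => ?_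
  rcases (hq u).eq_or_lt with hu | hu
  · simp [← hu]
  · have hxz := (marginal_apply_pos hq (fun v => (X v, Z v)) hu).ne'
    have hyz := (marginal_apply_pos hq (fun v => (Y v, Z v)) hu).ne'
    have hxyz := (marginal_apply_pos hq (fun v => (X v, Y v, Z v)) hu).ne'
    have hz := (marginal_apply_pos hq Z hu).ne'
    rw [condProduct, Real.logb_div hxyz (div_ne_zero (mul_ne_zero hxz hyz) hz),
      Real.logb_div (mul_ne_zero hxz hyz) hz, Real.logb_mul hxz hyz]
    ring

theorem marginal_eq_condProduct_of_condMutualInfo_eq_zero {b : ℕ} (hb : 2 ≤ b) {q : Ω → ℝ}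
    (hq : 0 ≤ q) {X : Ω → α} {Y : Ω → β} {Z : Ω → γ} (h : condMutualInfo b q X Y Z = 0)
    (t : α × β × γ) : marginal q (fun u => (X u, Y u, Z u)) t = condProduct q X Y Z t := by
  have hlogb : 0 < Real.log b := Real.log_pos (mod_cast hb)
  refine eq_of_sum_mul_log_div_nonpos (fun t _ => marginal_nonneg hq _ t)
    (fun t _ => condProduct_nonneg hq X Y Z t)
    (fun t _ => marginal_eq_zero_of_condProduct_eq_zero hq)
    (by rw [sum_condProduct, sum_marginal]) ?_ t (mem_univ t)
  simp only [condMutualInfo_eq_sum b hq, Real.logb, ← mul_div_assoc, ← sum_div] at h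
  exact ((div_eq_zero_iff.1 h).resolve_right hlogb.ne').le

theorem apply_eq_of_condMutualInfo_eq_zero {b : ℕ} (hb : 2 ≤ b) {q : α × β → ℝ}
    (hq : ∀ u, 0 < q u) {f : α × β → γ} (h : condMutualInfo b q Prod.fst Prod.snd f = 0)
    {x x' : α} {y y' : β} (hff : f (x, y') = f (x', y)) : f (x, y) = f (x', y) := by
  have hq0 : 0 ≤ q := fun u => (hq u).le
  have hpos : 0 < condProduct q Prod.fst Prod.snd f (x, y, f (x', y)) :=
    condProduct_pos hq0 (hq (x, y')) (hq (x', y)) hff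
  rw [← marginal_eq_condProduct_of_condMutualInfo_eq_zero hb hq0 h] at hpos
  obtain ⟨⟨x₀, y₀⟩, hu⟩ := exists_apply_eq_of_marginal_ne_zero hpos.ne'
  simp only [Prod.mk.injEq] at hu
  obtain ⟨rfl, rfl, hf⟩ := hu
  exact hf

theorem cycle_guessing_stmt14_general {b : ℕ} (hb : 2 ≤ b) {q : α × β → ℝ} (hq : ∀ u, 0 < q u)
    {f : α × β → γ} (h : condMutualInfo b q Prod.fst Prod.snd f = 0) (z : γ) :
    (univ.filter fun u => f u = z) =
        (univ.filter fun u => f u = z).image Prod.fst ×ˢ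
          (univ.filter fun u => f u = z).image Prod.snd ∧
      ((univ.filter fun u => f u = z).image Prod.fst).card *
        ((univ.filter fun u => f u = z).image Prod.snd).card =
          (univ.filter fun u => f u = z).card := by
  have hprod : (univ.filter fun u => f u = z) =
      (univ.filter fun u => f u = z).image Prod.fst ×ˢ
        (univ.filter fun u => f u = z).image Prod.snd := by
    refine subset_product.antisymm fun ⟨x, y⟩ hmem => ?_
    simp only [mem_product, mem_image, mem_filter_univ, Prod.exists, exists_and_right,
      exists_eq_right] at hmem
    obtain ⟨⟨y', hy'⟩, ⟨x', hx'⟩⟩ := hmem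
    have hxy : f (x, y) = f (x', y) :=
      apply_eq_of_condMutualInfo_eq_zero hb hq h (hy'.trans hx'.symm)
    exact (mem_filter_univ _).2 (hxy.trans hx')
  exact ⟨hprod, by rw [← card_product, ← hprod]⟩

end CondMutualInfo

theorem Lset_eq_image_fst (s : ℕ) (f : Fin s × Fin s → Fin s) (z : Fin s) :
    Lset s f z = (univ.filter fun u => f u = z).image Prod.fst := by
  ext x
  simp [Lset]

theorem Rset_eq_image_snd (s : ℕ) (f : Fin s × Fin s → Fin s) (z : Fin s) :
    Rset s f z = (univ.filter fun u => f u = z).image Prod.snd := by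
  ext y
  simp [Rset]

theorem unifPair_pos {s : ℕ} (hs : 0 < s) (u : Fin s × Fin s) : 0 < unifPair s u := by
  unfold unifPair
  positivity

/-- Let `s ≥ 2` and let `f : Z_s × Z_s → Z_s` be a semi-perfect
function.  Then for every `z ∈ Z_s`, `f⁻¹(z) = L(f,z) × R(f,z)`, and moreover
`|L(f,z)| · |R(f,z)| = s`. -/
theorem cycle_guessing_stmt14 (s : ℕ) (hs : 2 ≤ s)
    (f : Fin s × Fin s → Fin s) (hf : IsSemiPerfect s f) :
    ∀ z : Fin s,
      (Finset.univ.filter fun u : Fin s × Fin s => f u = z) =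
          Lset s f z ×ˢ Rset s f z ∧
        (Lset s f z).card * (Rset s f z).card = s := by
  simp only [Lset_eq_image_fst, Rset_eq_image_snd]
  exact fun z => (cycle_guessing_stmt14_general hs (unifPair_pos (by lia)) hf.2 z).imp_right
    fun hcard => hcard.trans (hf.1 z)
end

section
/- Let s ≥ 2 and n ≥ 4 be integers and let ε be a constant with 0 < ε ≤ 1/(s²(2s+1)). Let P = (f_1,…,f_n) be a non-trivial protocol on C_n with s colours and let X be uniformly distributed on Fix(P) (indices modulo n, so X_0 = X_n). If f_1 and f_2 are semi-perfect functions and the pairs (X_0, X_2) and (X_1, X_3) are (s², ε)-uniform, then for any c_1, c_2 ∈ Z_s, |{ c_0 : f_1(c_0, c_2) = c_1 }| = |{ c_3 : f_2(c_1, c_3) = c_2 }|. -/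
open Finset

/-- Base-`s` Shannon entropy of the random variable `g(X)` where `X` is uniformly
distributed on the finite set `F`. -/
noncomputable def entOf (s : ℕ) {α β : Type} [DecidableEq β] [Fintype β]
    (F : Finset α) (g : α → β) : ℝ :=
  -∑ y : β, (((F.filter fun c => g c = y).card : ℝ) / (F.card : ℝ)) *
      Real.logb s (((F.filter fun c => g c = y).card : ℝ) / (F.card : ℝ))

/-- The fixed set of a protocol `f` on the cycle `C_n` with `s` colours:
all colourings `c` with `c i = f i (c (i-1), c (i+1))` for every vertex `i`
(vertex indices taken modulo `n`). -/
def cycleFix (n s : ℕ) [NeZero n] (f : ZMod n → Fin s × Fin s → Fin s) :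
    Finset (ZMod n → Fin s) :=
  Finset.univ.filter fun c => ∀ i, c i = f i (c (i - 1), c (i + 1))

/-- `h(i₁,…,i_k)`: entropy (base `s`) of the tuple of coordinates of `X ∈_u F`
indexed by the set `T` of integers (interpreted modulo `n`). -/
noncomputable def entT (n s : ℕ) [NeZero n] (F : Finset (ZMod n → Fin s))
    (T : Finset ℤ) : ℝ :=
  entOf s F (fun c => fun i : {x // x ∈ T} => c ((i.1 : ℤ) : ZMod n))

/-- `H_j^k = h(j,j+1,…,k-1) + h(j+1,j+2,…,k)`. -/
noncomputable def entH (n s : ℕ) [NeZero n] (F : Finset (ZMod n → Fin s))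
    (j k : ℤ) : ℝ :=
  entT n s F (Finset.Icc j (k - 1)) + entT n s F (Finset.Icc (j + 1) k)

/-- The pair `(X_a, X_b)` of coordinates of `X ∈_u F` is `(s², ε)`-uniform, i.e. each
value in `Z_s × Z_s` has probability within `ε` of `1/s²`. -/
def pairUnif (n s : ℕ) [NeZero n] (F : Finset (ZMod n → Fin s))
    (a b : ZMod n) (ε : ℝ) : Prop :=
  ∀ z : Fin s × Fin s,
    |((F.filter fun c => (c a, c b) = z).card : ℝ) / (F.card : ℝ)
      - 1 / (s ^ 2 : ℝ)| ≤ ε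

/-!
On `Fix(P)` the vertex `X_i` is determined by its neighbours, so the event
`X_i = x, X_{i+1} = y` says both that `(X_{i-1}, X_{i+1})` lies in `A × {y}`, where
`A = {w : f_i(w, y) = x}`, and that `(X_i, X_{i+2})` lies in `{x} × B`, where
`B = {z : f_{i+1}(x, z) = y}`. Its probability is therefore within `|A| ε` of `|A| / s²` and
within `|B| ε` of `|B| / s²`. If `|A| ≠ |B|` then `|A| + |B| ≤ 2s - 1`, so
`1 / s² ≤ (2s - 1) ε`, which is impossible for small `ε`.
-/

section Estimates

variable {𝕜 : Type*} [Field 𝕜] [LinearOrder 𝕜] [IsStrictOrderedRing 𝕜]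

lemma abs_card_filter_mem_div_card_sub_le {α β : Type*} [DecidableEq β] (F : Finset α) (g : α → β)
    (A : Finset β) {q ε : 𝕜} (h : ∀ z ∈ A, |(#{x ∈ F | g x = z} : 𝕜) / #F - q| ≤ ε) :
    |(#{x ∈ F | g x ∈ A} : 𝕜) / #F - #A * q| ≤ #A * ε := by
  have hfib : #{x ∈ F | g x ∈ A} = ∑ z ∈ A, #{x ∈ F | g x = z} :=
    (sum_card_fiberwise_eq_card_filter F A g).symm
  calc |(#{x ∈ F | g x ∈ A} : 𝕜) / #F - #A * q|
      = |∑ z ∈ A, ((#{x ∈ F | g x = z} : 𝕜) / #F - q)| := by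
        rw [hfib, Nat.cast_sum, sum_div, sum_sub_distrib, sum_const, nsmul_eq_mul]
    _ ≤ ∑ z ∈ A, |(#{x ∈ F | g x = z} : 𝕜) / #F - q| := abs_sum_le_sum_abs _ _
    _ ≤ #A * ε := by simpa only [nsmul_eq_mul] using sum_le_card_nsmul A _ ε h

lemma eq_of_abs_sub_natCast_mul_le {a b s : ℕ} {p t ε : 𝕜} (ha : a ≤ s) (hb : b ≤ s)
    (hpa : |p - a * t| ≤ a * ε) (hpb : |p - b * t| ≤ b * ε) (hε : (2 * s - 1) * ε < t) :
    a = b := by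
  wlog hab : a ≤ b generalizing a b
  · exact (this hb ha hpb hpa (le_of_not_ge hab)).symm
  by_contra hne
  have hlt : a + 1 ≤ b := by lia
  have hlt' : (a : 𝕜) + 1 ≤ b := by exact_mod_cast hlt
  have hsum : (a : 𝕜) + b ≤ 2 * s - 1 := by
    have : a + b + 1 ≤ 2 * s := by lia
    rw [le_sub_iff_add_le]
    exact_mod_cast this
  have hb₀ : (0 : 𝕜) < b := by exact_mod_cast (by lia : 0 < b)
  have hε₀ : 0 ≤ ε := nonneg_of_mul_nonneg_right ((abs_nonneg _).trans hpb) hb₀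
  have hgap : (b - a : 𝕜) * t ≤ (a + b) * ε := by
    linarith [(abs_le.1 hpa).2, (abs_le.1 hpb).1]
  have hsmall : (a + b) * ε < t := (mul_le_mul_of_nonneg_right hsum hε₀).trans_lt hε
  have ht : 0 < t := (by positivity : 0 ≤ (a + b) * ε).trans_lt hsmall
  have hstep : t ≤ (b - a) * t := le_mul_of_one_le_left ht.le (by linarith)
  exact (hstep.trans hgap).not_gt hsmall

lemma two_mul_sub_one_mul_lt_one_div_sq {s ε : 𝕜} (hs : 0 < s) (hε : 0 < ε)
    (hε' : ε ≤ 1 / (s ^ 2 * (2 * s + 1))) : (2 * s - 1) * ε < 1 / s ^ 2 :=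
  calc (2 * s - 1) * ε < (2 * s + 1) * ε := by gcongr; linarith
    _ ≤ (2 * s + 1) * (1 / (s ^ 2 * (2 * s + 1))) := by gcongr
    _ = 1 / s ^ 2 := by field_simp

end Estimates

section Cycle

variable {n s : ℕ} [NeZero n] {f : ZMod n → Fin s × Fin s → Fin s} {ε : ℝ}

lemma apply_eq_of_mem_cycleFix {c : ZMod n → Fin s} (hc : c ∈ cycleFix n s f) (i : ZMod n) :
    c i = f i (c (i - 1), c (i + 1)) :=
  (mem_filter.1 hc).2 i

/-- The joint distribution of the colours of the edge `{i, i + 1}`: the probability that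
`X_i = x` and `X_{i+1} = y` when `X` is uniform on `F`, the quantity that links the preimage
counts of `f i` and `f (i + 1)`. It is `0` when `F` is empty. -/
noncomputable def edgeProb (F : Finset (ZMod n → Fin s)) (i : ZMod n) (x y : Fin s) : ℝ :=
  #{c ∈ F | c i = x ∧ c (i + 1) = y} / #F

lemma abs_edgeProb_sub_le_of_pairUnif_left {i : ZMod n}
    (hu : pairUnif n s (cycleFix n s f) (i - 1) (i + 1) ε) (x y : Fin s) :
    |edgeProb (cycleFix n s f) i x y - #{w | f i (w, y) = x} * (1 / (s ^ 2 : ℝ))|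
      ≤ #{w | f i (w, y) = x} * ε := by
  have hevent : {c ∈ cycleFix n s f | c i = x ∧ c (i + 1) = y} =
      {c ∈ cycleFix n s f |
        (c (i - 1), c (i + 1)) ∈ ({w | f i (w, y) = x} : Finset (Fin s)) ×ˢ {y}} := by
    refine filter_congr fun c hc => ?_
    rw [apply_eq_of_mem_cycleFix hc i]
    simp +contextual only [mem_product, mem_filter_univ, mem_singleton, and_congr_left_iff,
      implies_true]
  have hbound := abs_card_filter_mem_div_card_sub_le (cycleFix n s f)
    (fun c => (c (i - 1), c (i + 1))) (({w | f i (w, y) = x} : Finset (Fin s)) ×ˢ {y})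
    fun z _ => hu z
  rwa [← hevent, card_product, card_singleton, mul_one] at hbound

lemma abs_edgeProb_sub_le_of_pairUnif_right {i : ZMod n}
    (hu : pairUnif n s (cycleFix n s f) i (i + 2) ε) (x y : Fin s) :
    |edgeProb (cycleFix n s f) i x y - #{z | f (i + 1) (x, z) = y} * (1 / (s ^ 2 : ℝ))|
      ≤ #{z | f (i + 1) (x, z) = y} * ε := by
  have hevent : {c ∈ cycleFix n s f | c i = x ∧ c (i + 1) = y} =
      {c ∈ cycleFix n s f |
        (c i, c (i + 2)) ∈ {x} ×ˢ ({z | f (i + 1) (x, z) = y} : Finset (Fin s))} := by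
    refine filter_congr fun c hc => ?_
    rw [apply_eq_of_mem_cycleFix hc (i + 1), add_sub_cancel_right, add_assoc, one_add_one_eq_two]
    simp +contextual only [mem_product, mem_filter_univ, mem_singleton, and_congr_right_iff,
      implies_true]
  have hbound := abs_card_filter_mem_div_card_sub_le (cycleFix n s f)
    (fun c => (c i, c (i + 2))) ({x} ×ˢ ({z | f (i + 1) (x, z) = y} : Finset (Fin s)))
    fun z _ => hu z
  rwa [← hevent, card_product, card_singleton, one_mul] at hbound

theorem cycle_guessing_stmt15_general (hε : (2 * s - 1) * ε < 1 / (s ^ 2 : ℝ)) {i : ZMod n}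
    (hl : pairUnif n s (cycleFix n s f) (i - 1) (i + 1) ε)
    (hr : pairUnif n s (cycleFix n s f) i (i + 2) ε) (x y : Fin s) :
    #{w | f i (w, y) = x} = #{z | f (i + 1) (x, z) = y} :=
  eq_of_abs_sub_natCast_mul_le (card_finset_fin_le _) (card_finset_fin_le _)
    (abs_edgeProb_sub_le_of_pairUnif_left hl x y) (abs_edgeProb_sub_le_of_pairUnif_right hr x y) hε

end Cycle

/-- Let `s ≥ 2`, `n ≥ 4` and `0 < ε ≤ 1/(s²(2s+1))`.  Let `P` be a
non-trivial protocol on `C_n` with `s` colours and `X` uniform on `Fix(P)` (indices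
modulo `n`, so `X₀ = X_n`).  If `f₁` and `f₂` are semi-perfect and the pairs
`(X₀, X₂)` and `(X₁, X₃)` are `(s², ε)`-uniform, then for any `c₁, c₂ ∈ Z_s`,
`|{c₀ : f₁(c₀,c₂) = c₁}| = |{c₃ : f₂(c₁,c₃) = c₂}|`. -/
theorem cycle_guessing_stmt15 (n s : ℕ) [NeZero n] (hn : 4 ≤ n) (hs : 2 ≤ s)
    (ε : ℝ) (hε : 0 < ε) (hε' : ε ≤ 1 / ((s : ℝ) ^ 2 * (2 * s + 1)))
    (f : ZMod n → Fin s × Fin s → Fin s)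
    (hne : (cycleFix n s f).Nonempty)
    (h1 : IsSemiPerfect s (f 1)) (h2 : IsSemiPerfect s (f 2))
    (hu02 : pairUnif n s (cycleFix n s f) 0 2 ε)
    (hu13 : pairUnif n s (cycleFix n s f) 1 3 ε) :
    ∀ c1 c2 : Fin s,
      (Finset.univ.filter fun c0 : Fin s => f 1 (c0, c2) = c1).card =
        (Finset.univ.filter fun c3 : Fin s => f 2 (c1, c3) = c2).card := by
  have hε₁ := two_mul_sub_one_mul_lt_one_div_sq (Nat.cast_pos.2 (by lia)) hε hε'
  have hgen := cycle_guessing_stmt15_general (f := f) (i := 1) hε₁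
  rw [sub_self, one_add_one_eq_two, (by norm_num : (1 : ZMod n) + 2 = 3)] at hgen
  exact hgen hu02 hu13
end

section
/- Let n ≥ 3 be an odd integer, let s ≥ 2 be an integer and let a be the greatest divisor of s with a ≤ √s. If P = (f_1,…,f_n) is a non-trivial protocol on C_n with s colours such that f_j is a perfect function for some index j, then fix(P) ≤ a · s^{(n−1)/2}. -/
open Finset

/-- `f` is perfect if it is semi-perfect and the cardinalities `|L(f,z)|` and
`|R(f,z)|` do not depend on `z`. -/
def IsPerfect (s : ℕ) (f : Fin s × Fin s → Fin s) : Prop :=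
  IsSemiPerfect s f ∧ ∀ z z' : Fin s,
    (Lset s f z).card = (Lset s f z').card ∧ (Rset s f z).card = (Rset s f z').card

/-!
Conditioned on `f = z`, the uniform pair `U` is uniform on the fibre `f⁻¹(z)`, so `I(U₁; U₂ | f(U))`
is the average over `z` of the mutual information of the two coordinates on that fibre. By
`log t ≥ 1 - 1/t` this is nonnegative and vanishes only if the fibre is a rectangle, namely
`L(f,z) × R(f,z)`. Hence a perfect function has `l * r = s`, where `l = |L(f,z)|` and
`r = |R(f,z)|`, and therefore `min l r ≤ a`.

On an odd cycle a fixed colouring is determined by its values on every second vertex, a walk that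
starts and ends at the two ends of one edge. Along the edges `(j-1, j)` and `(j, j+1)` the two
end colours are restricted to `l * s` and `r * s` pairs respectively.
-/

section UniformMutualInfo

variable {α β : Type*}

/-- The number of elements of `S` in the row of `x`; divided by `#S`, it is the marginal
probability of `x` when `S` carries the uniform distribution. -/
def rowCard [DecidableEq α] (S : Finset (α × β)) (x : α) : ℕ := #{u ∈ S | u.1 = x}

/-- The number of elements of `S` in the column of `y`; divided by `#S`, it is the marginal
probability of `y` when `S` carries the uniform distribution. -/
def colCard [DecidableEq β] (S : Finset (α × β)) (y : β) : ℕ := #{u ∈ S | u.2 = y}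

lemma rowCard_pos_iff [DecidableEq α] {S : Finset (α × β)} {x : α} :
    0 < rowCard S x ↔ x ∈ S.image Prod.fst := by
  simp only [rowCard, card_pos, filter_nonempty_iff, mem_image]

lemma colCard_pos_iff [DecidableEq β] {S : Finset (α × β)} {y : β} :
    0 < colCard S y ↔ y ∈ S.image Prod.snd := by
  simp only [colCard, card_pos, filter_nonempty_iff, mem_image]

variable [DecidableEq α] [DecidableEq β] {S : Finset (α × β)}

/-- The mutual information, in nats, of the two coordinates of a uniform element of `S`. The
argument of the logarithm is `(1 / #S) / ((rowCard / #S) * (colCard / #S))`; for `S = ∅` the value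
is `0`. -/
noncomputable def uniformMutualInfo (S : Finset (α × β)) : ℝ :=
  (∑ u ∈ S, Real.log (#S / (rowCard S u.1 * colCard S u.2))) / #S

lemma rowCard_mul_colCard_pos {u : α × β} (hu : u ∈ S.image Prod.fst ×ˢ S.image Prod.snd) :
    0 < rowCard S u.1 * colCard S u.2 :=
  Nat.mul_pos (rowCard_pos_iff.2 (mem_product.1 hu).1) (colCard_pos_iff.2 (mem_product.1 hu).2)

lemma log_card_div_rowCard_mul_colCard {u : α × β} (hu : u ∈ S) {N : ℝ} (hN : N ≠ 0) :
    Real.log (#S / (rowCard S u.1 * colCard S u.2)) =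
      Real.log (1 / N) + Real.log (#S / N) - Real.log (rowCard S u.1 / N)
        - Real.log (colCard S u.2 / N) := by
  have hcard : (#S : ℝ) ≠ 0 := by exact_mod_cast (card_pos.2 ⟨u, hu⟩).ne'
  have hrow : (rowCard S u.1 : ℝ) ≠ 0 := by
    exact_mod_cast (rowCard_pos_iff.2 (mem_image_of_mem _ hu)).ne'
  have hcol : (colCard S u.2 : ℝ) ≠ 0 := by
    exact_mod_cast (colCard_pos_iff.2 (mem_image_of_mem _ hu)).ne'
  rw [Real.log_div hcard (mul_ne_zero hrow hcol), Real.log_mul hrow hcol, Real.log_div hrow hN,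
    Real.log_div hcol hN, Real.log_div hcard hN, Real.log_div one_ne_zero hN, Real.log_one]
  ring

lemma card_mul_uniformMutualInfo (S : Finset (α × β)) :
    #S * uniformMutualInfo S =
      ∑ u ∈ S, Real.log (#S / (rowCard S u.1 * colCard S u.2)) := by
  rcases S.eq_empty_or_nonempty with rfl | hS
  · simp
  · exact mul_div_cancel₀ _ (by exact_mod_cast hS.card_pos.ne')

lemma sum_product_rowCard_mul_colCard (S : Finset (α × β)) :
    ∑ u ∈ S.image Prod.fst ×ˢ S.image Prod.snd, rowCard S u.1 * colCard S u.2 = #S ^ 2 := by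
  rw [sum_product, ← sum_mul_sum, sq]
  exact congrArg₂ _ (card_eq_sum_card_image Prod.fst S).symm
    (card_eq_sum_card_image Prod.snd S).symm

lemma sum_rowCard_mul_colCard_le (S : Finset (α × β)) :
    ∑ u ∈ S, rowCard S u.1 * colCard S u.2 ≤ #S ^ 2 :=
  (sum_le_sum_of_subset subset_product).trans_eq (sum_product_rowCard_mul_colCard S)

lemma sum_rowCard_mul_colCard_lt (h : S ≠ S.image Prod.fst ×ˢ S.image Prod.snd) :
    ∑ u ∈ S, rowCard S u.1 * colCard S u.2 < #S ^ 2 := by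
  obtain ⟨u, hu, huS⟩ := exists_of_ssubset (subset_product.ssubset_of_ne h)
  rw [← sum_product_rowCard_mul_colCard S]
  exact sum_lt_sum_of_subset subset_product hu huS (rowCard_mul_colCard_pos hu)
    fun _ _ _ => Nat.zero_le _

lemma one_sub_sum_div_sq_le_uniformMutualInfo (hS : S.Nonempty) :
    1 - ((∑ u ∈ S, rowCard S u.1 * colCard S u.2 : ℕ) : ℝ) / #S ^ 2 ≤ uniformMutualInfo S := by
  have hcard : (0 : ℝ) < #S := by exact_mod_cast hS.card_pos
  have hlog : ∀ u ∈ S, 1 - (rowCard S u.1 * colCard S u.2 : ℝ) / #S ≤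
      Real.log (#S / (rowCard S u.1 * colCard S u.2)) := by
    intro u hu
    have hpos : (0 : ℝ) < rowCard S u.1 * colCard S u.2 := by
      exact_mod_cast rowCard_mul_colCard_pos (subset_product hu)
    simpa only [inv_div] using Real.one_sub_inv_le_log_of_pos (div_pos hcard hpos)
  rw [uniformMutualInfo, le_div_iff₀ hcard]
  refine le_of_eq_of_le ?_ (sum_le_sum hlog)
  rw [sum_sub_distrib, ← sum_div, sum_const, nsmul_one]
  push_cast
  field_simp

lemma uniformMutualInfo_nonneg (S : Finset (α × β)) : 0 ≤ uniformMutualInfo S := by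
  rcases S.eq_empty_or_nonempty with rfl | hS
  · simp [uniformMutualInfo]
  · refine le_trans (sub_nonneg.2 (div_le_one_of_le₀ ?_ (by positivity)))
      (one_sub_sum_div_sq_le_uniformMutualInfo hS)
    exact_mod_cast sum_rowCard_mul_colCard_le S

lemma eq_product_of_uniformMutualInfo_eq_zero (h : uniformMutualInfo S = 0) :
    S = S.image Prod.fst ×ˢ S.image Prod.snd := by
  rcases S.eq_empty_or_nonempty with rfl | hS
  · simp
  · by_contra hne
    have hcard : (0 : ℝ) < #S := by exact_mod_cast hS.card_pos
    have hlt : ((∑ u ∈ S, rowCard S u.1 * colCard S u.2 : ℕ) : ℝ) / #S ^ 2 < 1 := by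
      rw [div_lt_one (pow_pos hcard 2)]
      exact_mod_cast sum_rowCard_mul_colCard_lt hne
    have hle := one_sub_sum_div_sq_le_uniformMutualInfo hS
    linarith

end UniformMutualInfo

lemma pEnt_eq_neg_sum_s17 (s : ℕ) {α β : Type} [Fintype α] [DecidableEq β] [Fintype β]
    (q : α → ℝ) (g : α → β) :
    pEnt s q g = -∑ u, q u * Real.logb s (∑ x with g x = g u, q x) := by
  rw [pEnt, ← sum_fiberwise univ g]
  congr 1
  refine sum_congr rfl fun y _ => ?_
  rw [sum_mul]
  refine sum_congr rfl fun x hx => ?_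
  rw [(mem_filter.1 hx).2]

section ConditionalMutualInfo

variable {s : ℕ}

lemma pEnt_unifPair {β : Type} [DecidableEq β] [Fintype β] (g : Fin s × Fin s → β) :
    pEnt s (unifPair s) g =
      -(∑ u, Real.log (#{v | g v = g u} / (s : ℝ) ^ 2)) / s ^ 2 / Real.log s := by
  simp only [pEnt_eq_neg_sum_s17, unifPair, Real.logb, sum_const, nsmul_eq_mul, mul_one_div, neg_div,
    sum_div]
  exact congrArg _ (sum_congr rfl fun u _ => by ring)

lemma condMI_unifPair (f : Fin s × Fin s → Fin s) :
    condMI s f (unifPair s) =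
      (∑ z, #{u | f u = z} / (s : ℝ) ^ 2 * uniformMutualInfo {u | f u = z}) / Real.log s := by
  have hrow (u : Fin s × Fin s) :
      #{v | (v.1, f v) = (u.1, f u)} = rowCard {v | f v = f u} u.1 := by
    simp only [rowCard, filter_filter, Prod.mk.injEq, and_comm]
  have hcol (u : Fin s × Fin s) :
      #{v | (v.2, f v) = (u.2, f u)} = colCard {v | f v = f u} u.2 := by
    simp only [colCard, filter_filter, Prod.mk.injEq, and_comm]
  have hpoint (u : Fin s × Fin s) : #{v | (v.1, v.2, f v) = (u.1, u.2, f u)} = 1 :=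
    card_eq_one.2 ⟨u, by ext v; simp only [mem_filter_univ, mem_singleton]; grind⟩
  have hmem (u : Fin s × Fin s) : u ∈ ({v | f v = f u} : Finset (Fin s × Fin s)) :=
    (mem_filter_univ u).2 rfl
  have hs (u : Fin s × Fin s) : (s : ℝ) ^ 2 ≠ 0 := pow_ne_zero 2 (by exact_mod_cast u.1.pos.ne')
  have hfiber : ∑ z, #{u | f u = z} * uniformMutualInfo {u | f u = z} =
      ∑ u, Real.log (#{v | f v = f u} /
        (rowCard {v | f v = f u} u.1 * colCard {v | f v = f u} u.2)) := by
    rw [← sum_fiberwise univ f]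
    refine sum_congr rfl fun z _ => (card_mul_uniformMutualInfo _).trans ?_
    refine sum_congr rfl fun u hu => ?_
    rw [(mem_filter.1 hu).2]
  simp only [div_mul_eq_mul_div, ← sum_div, hfiber,
    fun u => log_card_div_rowCard_mul_colCard (hmem u) (hs u), condMI, pEnt_unifPair,
    hrow, hcol, hpoint, Nat.cast_one, sum_sub_distrib, sum_add_distrib]
  ring

lemma Lset_eq_image (f : Fin s × Fin s → Fin s) (z : Fin s) :
    Lset s f z = ({u | f u = z} : Finset (Fin s × Fin s)).image Prod.fst := by
  ext x
  simp [Lset]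

lemma Rset_eq_image (f : Fin s × Fin s → Fin s) (z : Fin s) :
    Rset s f z = ({u | f u = z} : Finset (Fin s × Fin s)).image Prod.snd := by
  ext y
  simp [Rset]

lemma fiber_eq_product_of_condMI_eq_zero (hs : 2 ≤ s) {f : Fin s × Fin s → Fin s}
    (hf : condMI s f (unifPair s) = 0) (z : Fin s) :
    ({u | f u = z} : Finset (Fin s × Fin s)) = Lset s f z ×ˢ Rset s f z := by
  rw [Lset_eq_image, Rset_eq_image]
  rcases ({u | f u = z} : Finset (Fin s × Fin s)).eq_empty_or_nonempty with h | h
  · simp only [h, image_empty, empty_product]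
  have hlog : Real.log s ≠ 0 := (Real.log_pos (by exact_mod_cast hs)).ne'
  have hcard : (#{u | f u = z} : ℝ) ≠ 0 := by exact_mod_cast h.card_pos.ne'
  have hnonneg : ∀ z ∈ univ, 0 ≤ #{u | f u = z} / (s : ℝ) ^ 2 * uniformMutualInfo {u | f u = z} :=
    fun z _ => mul_nonneg (by positivity) (uniformMutualInfo_nonneg _)
  rw [condMI_unifPair, div_eq_zero_iff, or_iff_left hlog, sum_eq_zero_iff_of_nonneg hnonneg] at hf
  refine eq_product_of_uniformMutualInfo_eq_zero ((mul_eq_zero_iff_left ?_).1 (hf z (mem_univ z)))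
  positivity

lemma IsSemiPerfect.card_Lset_mul_card_Rset (hs : 2 ≤ s) {f : Fin s × Fin s → Fin s}
    (hf : IsSemiPerfect s f) (z : Fin s) : #(Lset s f z) * #(Rset s f z) = s := by
  rw [← card_product, ← fiber_eq_product_of_condMI_eq_zero hs hf.2, hf.1 z]

lemma IsPerfect.exists_card_Lset_card_Rset (hs : 2 ≤ s) {f : Fin s × Fin s → Fin s}
    (hf : IsPerfect s f) :
    ∃ l r, l * r = s ∧ ∀ z, #(Lset s f z) = l ∧ #(Rset s f z) = r :=
  ⟨_, _, hf.1.card_Lset_mul_card_Rset hs ⟨0, by omega⟩, fun z => hf.2 z _⟩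

end ConditionalMutualInfo

section OddCycle

variable {m : ℕ} {K : Type*}

/-- A family of colourings of the cycle `C_n` is neighbour-determined if the colours of the two
neighbours of a vertex determine its own colour; these are the families contained in the fixed set
of some protocol. -/
def NeighborDetermined {n : ℕ} (F : Finset (ZMod n → K)) : Prop :=
  ∀ c ∈ F, ∀ c' ∈ F, ∀ i, c (i - 1) = c' (i - 1) → c (i + 1) = c' (i + 1) → c i = c' i

lemma exists_eq_add_even_or_odd (i t : ZMod (2 * m + 1)) :
    (∃ k ≤ m, t = i + 2 * k) ∨ ∃ k < m, t = i + 2 * k + 1 := by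
  have ht : t = i + ((t - i).val : ZMod (2 * m + 1)) := by
    rw [ZMod.natCast_zmod_val, add_sub_cancel]
  have hlt := (t - i).val_lt
  rcases Nat.even_or_odd' (t - i).val with ⟨k, hk | hk⟩
  · exact .inl ⟨k, by omega, by rw [ht, hk]; push_cast; rfl⟩
  · exact .inr ⟨k, by omega, by rw [ht, hk]; push_cast; ring⟩

lemma NeighborDetermined.eq_of_alternate_eq {F : Finset (ZMod (2 * m + 1) → K)}
    (hF : NeighborDetermined F) {c c' : ZMod (2 * m + 1) → K} (hc : c ∈ F) (hc' : c' ∈ F)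
    (i : ZMod (2 * m + 1)) (h : ∀ k ≤ m, c (i + 2 * k) = c' (i + 2 * k)) : c = c' := by
  funext t
  rcases exists_eq_add_even_or_odd i t with ⟨k, hk, rfl⟩ | ⟨k, hk, rfl⟩
  · exact h k hk
  · refine hF c hc c' hc' _ ?_ ?_
    · rw [add_sub_cancel_right]
      exact h k hk.le
    · convert h (k + 1) hk using 2 <;> push_cast <;> ring

lemma NeighborDetermined.card_le_of_edge_mem [Fintype K]
    {F : Finset (ZMod (2 * (m + 1) + 1) → K)} (hF : NeighborDetermined F)
    (i : ZMod (2 * (m + 1) + 1)) {A : Finset (K × K)} (hA : ∀ c ∈ F, (c i, c (i + 1)) ∈ A) :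
    #F ≤ #A * Fintype.card K ^ m := by
  classical
  let φ (c : ZMod (2 * (m + 1) + 1) → K) : (K × K) × (Fin m → K) :=
    ((c i, c (i + 1)), fun k => c (i + 1 + 2 * (k + 1 : ℕ)))
  have hlast : i + 1 + 2 * (m + 1 : ℕ) = i := by
    have := ZMod.natCast_self (2 * (m + 1) + 1)
    push_cast at this ⊢
    linear_combination this
  have hmaps : ∀ c ∈ F, φ c ∈ A ×ˢ (univ : Finset (Fin m → K)) := fun c hc =>
    mem_product.2 ⟨hA c hc, mem_univ _⟩
  have hinj : Set.InjOn φ F := by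
    intro c hc c' hc' h
    simp only [φ, Prod.mk.injEq, funext_iff] at h
    obtain ⟨⟨hi, hi'⟩, hmid⟩ := h
    refine hF.eq_of_alternate_eq hc hc' (i + 1) fun k hk => ?_
    rcases k with _ | k
    · simpa only [Nat.cast_zero, mul_zero, add_zero] using hi'
    rcases hk.eq_or_lt with hk | hk
    · rwa [hk, hlast]
    · exact hmid ⟨k, by omega⟩
  refine (card_le_card_of_injOn φ hmaps hinj).trans_eq ?_
  rw [card_product, card_univ, Fintype.card_fun, Fintype.card_fin]

end OddCycle

section Protocol

variable {m s : ℕ} [NeZero (2 * (m + 1) + 1)]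

lemma neighborDetermined_cycleFix (n s : ℕ) [NeZero n] (f : ZMod n → Fin s × Fin s → Fin s) :
    NeighborDetermined (cycleFix n s f) := by
  intro c hc c' hc' i hpred hsucc
  rw [(mem_filter.1 hc).2 i, (mem_filter.1 hc').2 i, hpred, hsucc]

variable (f : ZMod (2 * (m + 1) + 1) → Fin s × Fin s → Fin s) (j : ZMod (2 * (m + 1) + 1))

lemma card_cycleFix_le_sum_card_Lset :
    #(cycleFix _ s f) ≤ (∑ z, #(Lset s (f j) z)) * s ^ m := by
  let A : Finset (Fin s × Fin s) := {p | p.1 ∈ Lset s (f j) p.2}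
  have hA : #A = ∑ z, #(Lset s (f j) z) := by
    rw [card_filter, Fintype.sum_prod_type_right]
    simp only [← card_filter, filter_univ_mem]
  have hedge : ∀ c ∈ cycleFix _ s f, (c (j - 1), c (j - 1 + 1)) ∈ A := by
    intro c hc
    rw [sub_add_cancel, mem_filter_univ, Lset, mem_filter_univ]
    exact ⟨c (j + 1), ((mem_filter.1 hc).2 j).symm⟩
  simpa only [hA, Fintype.card_fin] using
    (neighborDetermined_cycleFix _ s f).card_le_of_edge_mem (j - 1) hedge

lemma card_cycleFix_le_sum_card_Rset :
    #(cycleFix _ s f) ≤ (∑ z, #(Rset s (f j) z)) * s ^ m := by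
  let A : Finset (Fin s × Fin s) := {p | p.2 ∈ Rset s (f j) p.1}
  have hA : #A = ∑ z, #(Rset s (f j) z) := by
    rw [card_filter, Fintype.sum_prod_type]
    simp only [← card_filter, filter_univ_mem]
  have hedge : ∀ c ∈ cycleFix _ s f, (c j, c (j + 1)) ∈ A := by
    intro c hc
    rw [mem_filter_univ, Rset, mem_filter_univ]
    exact ⟨c (j - 1), ((mem_filter.1 hc).2 j).symm⟩
  simpa only [hA, Fintype.card_fin] using
    (neighborDetermined_cycleFix _ s f).card_le_of_edge_mem j hedge

end Protocol

/-- Let `n ≥ 3` be odd, `s ≥ 2`, and let `a` be the greatest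
divisor of `s` with `a ≤ √s`.  If `P = (f_i)` is a non-trivial protocol on `C_n`
with `s` colours such that `f_j` is a perfect function for some index `j`, then
`fix(P) ≤ a · s^{(n-1)/2}`. -/
theorem cycle_guessing_stmt17 (n s a : ℕ) [NeZero n] (hn : 3 ≤ n) (hodd : Odd n)
    (hs : 2 ≤ s)
    (ha : a ∣ s ∧ a * a ≤ s ∧ ∀ d : ℕ, d ∣ s → d * d ≤ s → d ≤ a)
    (f : ZMod n → Fin s × Fin s → Fin s)
    (hne : (cycleFix n s f).Nonempty)
    (j : ZMod n) (hperf : IsPerfect s (f j)) :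
    (cycleFix n s f).card ≤ a * s ^ ((n - 1) / 2) := by
  obtain ⟨m, rfl⟩ : ∃ m, n = 2 * (m + 1) + 1 := by
    obtain ⟨k, rfl⟩ := hodd
    exact ⟨k - 1, by omega⟩
  obtain ⟨l, r, hlr, hcard⟩ := hperf.exists_card_Lset_card_Rset hs
  have hle {d : ℕ} (hd : d ∣ s) (hdd : d * d ≤ s)
      (hfix : #(cycleFix _ s f) ≤ s * d * s ^ m) :
      #(cycleFix _ s f) ≤ a * s ^ ((2 * (m + 1) + 1 - 1) / 2) := by
    calc #(cycleFix _ s f) ≤ s * d * s ^ m := hfix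
      _ = d * s ^ (m + 1) := by ring
      _ ≤ a * s ^ (m + 1) := Nat.mul_le_mul_right _ (ha.2.2 d hd hdd)
      _ = a * s ^ ((2 * (m + 1) + 1 - 1) / 2) := by simp
  rcases le_total l r with h | h
  · refine hle (Dvd.intro r hlr) ((Nat.mul_le_mul_left l h).trans_eq hlr) ?_
    simpa [hcard] using card_cycleFix_le_sum_card_Lset f j
  · refine hle (Dvd.intro_left l hlr) ((Nat.mul_le_mul_right r h).trans_eq hlr) ?_
    simpa [hcard] using card_cycleFix_le_sum_card_Rset f j
end

section
/- For every integer s ≥ 2, let a be the greatest divisor of s with a ≤ √s. Then for every even integer n ≥ 4, the maximum of fix(P) over all protocols P on C_n with s colours equals s^{n/2} (i.e. gn(C_n, s) = n/2); and there exists a natural number N such that for every odd integer n > N, the maximum of fix(P) over all protocols P on C_n with s colours equals a · s^{(n−1)/2} (i.e. gn(C_n, s) = (n−1)/2 + log_s a), and this maximum is attained by the fractional-clique-partition protocol P_fcp. -/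
open Finset

/-- First coordinate `φ(z)` of a colour under the bijection `π : Z_a × Z_b ≃ Z_s`. -/
def fcpPhi {a b s : ℕ} (π : ZMod a × ZMod b ≃ Fin s) (z : Fin s) : ZMod a :=
  (π.symm z).1

/-- Second coordinate `ψ(z)` of a colour under the bijection `π : Z_a × Z_b ≃ Z_s`. -/
def fcpPsi {a b s : ℕ} (π : ZMod a × ZMod b ≃ Fin s) (z : Fin s) : ZMod b :=
  (π.symm z).2

/-- The fractional-clique-partition protocol `P_fcp` on `C_n` (`n` odd), for a
factorisation `s = a·b` with `a ≤ b` and a bijection `π : Z_a × Z_b ≃ Z_s`.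
Vertices are the residues modulo `n`, vertex `i` of the paper corresponding to the
residue of `i` (so vertex `n` is the residue `0`).  The first argument of `f i` is
the colour of vertex `i - 1` and the second the colour of vertex `i + 1`:
* `f 1 (c_n, c_2)   = π(φ(c_2), φ(c_n))` (regarding `Z_a ⊆ Z_b` via `val`),
* `f n (c_{n-1}, c_1) = π(ψ(c_1) mod a, ψ(c_{n-1}))`,
* `f i (c_{i-1}, c_{i+1}) = π(φ(c_{i-1}), ψ(c_{i+1}))` for even `i`, `2 ≤ i ≤ n-1`,
* `f i (c_{i-1}, c_{i+1}) = π(φ(c_{i+1}), ψ(c_{i-1}))` for odd `i`, `3 ≤ i ≤ n-2`. -/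
def fcpProtocol (n s a b : ℕ) [NeZero n] (π : ZMod a × ZMod b ≃ Fin s) :
    ZMod n → Fin s × Fin s → Fin s := fun i p =>
  if i.val = 1 then π (fcpPhi π p.2, (((fcpPhi π p.1).val : ℕ) : ZMod b))
  else if i.val = 0 then π ((((fcpPsi π p.2).val : ℕ) : ZMod a), fcpPsi π p.1)
  else if i.val % 2 = 0 then π (fcpPhi π p.1, fcpPsi π p.2)
  else π (fcpPhi π p.2, fcpPsi π p.1)

/-!
Read a fixed colouring around the cycle as an infinite periodic sequence `u`, in which `u (t + 1)`
is a function of `u t` and `u (t + 2)`. Let `P k` be the number of prefixes of length `k` of these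
sequences. A prefix of length `k ≥ 1` and the entry `k + 1` determine the prefix of length `k + 2`,
so `P (k + 2) ≤ s * P k`, while `P (n - 1)` already counts all fixed colourings. This settles even
`n`; for odd `n` it gives `a * s ^ ((n - 1) / 2)` as soon as, at some vertex, the colour of the left
neighbour leaves at most `a` possibilities.

Let `D k` be the number of prefixes of length `k` for which some value of the entry `k + 1` never
occurs; then even `P (k + 2) + D k ≤ s * P k`. Two cases remain.

* Some prefix has only extensions without missing values for six steps. Then the 0-1 matrices
  `R p` of the relation that colour `z` is possible after colour `x` at position `p` satisfy
  `R p * R (p + 1) = J`, the all-ones matrix, for three consecutive `p`. Associativity makes two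
  consecutive `R p` row regular, of degrees `d₁` and `d₂` with `d₁ * d₂ = s`, so the smaller degree
  is a divisor of `s` not exceeding `√s`.
* Otherwise `P k ≤ D k + ⋯ + D (k + 5)` for all `k ≥ 1`, and `P k * P (k + 1) / s ^ k` decays
  geometrically; for large `n` it is at most `1` at `k = n - 1`, which gives `s ^ ((n - 1) / 2)`.
-/

section Counting

variable {ι β γ δ : Type*} [DecidableEq β] [DecidableEq γ] [DecidableEq δ]

theorem card_image_le_card_image_of_determines {F : Finset ι} {g : ι → β} {e : ι → δ}
    (h : ∀ u ∈ F, ∀ v ∈ F, g u = g v → e u = e v) : #(F.image e) ≤ #(F.image g) := by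
  refine card_le_card_of_forall_subsingleton (fun y x => ∃ u ∈ F, e u = y ∧ g u = x) ?_ ?_
  · intro y hy
    obtain ⟨u, hu, rfl⟩ := mem_image.1 hy
    exact ⟨g u, mem_image_of_mem g hu, u, hu, rfl, rfl⟩
  · rintro _ - _ ⟨-, u, hu, rfl, rfl⟩ _ ⟨-, v, hv, rfl, hvu⟩
    exact h u hu v hv hvu.symm

theorem card_image_le_sum_card_image_fiber {F : Finset ι} {g : ι → β} {h : ι → γ} {e : ι → δ}
    (he : ∀ u ∈ F, ∀ v ∈ F, g u = g v → h u = h v → e u = e v) :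
    #(F.image e) ≤ ∑ b ∈ F.image g, #({u ∈ F | g u = b}.image h) := by
  have hsub : F.image (fun u => (⟨g u, h u⟩ : (_ : β) × γ)) ⊆
      (F.image g).sigma fun b => {u ∈ F | g u = b}.image h := by
    intro x hx
    obtain ⟨u, hu, rfl⟩ := mem_image.1 hx
    exact mem_sigma.2 ⟨mem_image_of_mem g hu, mem_image_of_mem h (mem_filter.2 ⟨hu, rfl⟩)⟩
  rw [← card_sigma]
  refine (card_image_le_card_image_of_determines fun u hu v hv huv => ?_).trans (card_le_card hsub)
  rw [Sigma.mk.injEq, heq_eq_eq] at huv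
  exact he u hu v hv huv.1 huv.2

end Counting

section RegularFactors

open Matrix

variable {α R : Type*} [Fintype α] [Semiring R]

theorem mulVec_one_eq_one_vecMul_of_mul_eq_allOnes {A B C : Matrix α α R}
    (hAB : A * B = vecMulVec 1 1) (hBC : B * C = vecMulVec 1 1) (x y : α) :
    (A *ᵥ 1) x = (1 ᵥ* C) y := by
  have h : vecMulVec (A *ᵥ 1) 1 = vecMulVec 1 (1 ᵥ* C) := by
    rw [← mul_vecMulVec, ← hBC, ← Matrix.mul_assoc, hAB, vecMulVec_mul]
  simpa [vecMulVec_apply] using congrFun₂ h x y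

theorem exists_mulVec_one_eq_of_mul_eq_allOnes [Nonempty α] {A B C D : Matrix α α R}
    (hAB : A * B = vecMulVec 1 1) (hBC : B * C = vecMulVec 1 1) (hCD : C * D = vecMulVec 1 1) :
    ∃ d₁ d₂ : R, d₁ * d₂ = Fintype.card α ∧
      (∀ x, (A *ᵥ 1) x = d₁) ∧ ∀ x, (B *ᵥ 1) x = d₂ := by
  inhabit α
  have hA x : (A *ᵥ 1) x = (1 ᵥ* C) default :=
    mulVec_one_eq_one_vecMul_of_mul_eq_allOnes hAB hBC x default
  have hB x : (B *ᵥ 1) x = (1 ᵥ* D) default :=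
    mulVec_one_eq_one_vecMul_of_mul_eq_allOnes hBC hCD x default
  refine ⟨_, _, ?_, hA, hB⟩
  calc (1 ᵥ* C) default * (1 ᵥ* D) default = (A *ᵥ (B *ᵥ 1)) default := by
        rw [funext hB, ← hA default]
        simp only [mulVec, dotProduct, sum_mul, Pi.one_apply, mul_one]
    _ = Fintype.card α := by
        rw [mulVec_mulVec, hAB]
        simp [mulVec, dotProduct, vecMulVec_apply]

end RegularFactors

section Sequences

open PiNat (res res_succ res_eq_res)

variable {α : Type*}

theorem res_eq_res_of_le {u v : ℕ → α} {j k : ℕ} (hjk : j ≤ k) (h : res u k = res v k) :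
    res u j = res v j :=
  res_eq_res.2 fun _ ht => res_eq_res.1 h (ht.trans_le hjk)

/-- The sequences in `F` obey the local rule `g` of a half-infinite path: each entry is a function
of its two neighbours. -/
def FollowsRule (g : ℕ → α → α → α) (F : Finset (ℕ → α)) : Prop :=
  ∀ u ∈ F, ∀ t, u (t + 1) = g t (u t) (u (t + 2))

theorem FollowsRule.res_add_three_eq {F : Finset (ℕ → α)} {g : ℕ → α → α → α}
    (hg : FollowsRule g F) {k : ℕ} {u v : ℕ → α} (hu : u ∈ F) (hv : v ∈ F)
    (hres : res u (k + 1) = res v (k + 1)) (hskip : u (k + 2) = v (k + 2)) :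
    res u (k + 3) = res v (k + 3) := by
  have hmid : u (k + 1) = v (k + 1) := by
    rw [hg u hu, hg v hv, hskip, res_eq_res.1 hres k.lt_succ_self]
  simp only [res_succ _ (k + 2), res_succ _ (k + 1), hres, hskip, hmid]

variable [DecidableEq α]

/-- The number of prefixes of length `k` of the sequences in `F`; its base-`s` logarithm plays the
role of the entropy of `k` consecutive vertices. -/
def prefixCount (F : Finset (ℕ → α)) (k : ℕ) : ℕ := #(F.image (res · k))

/-- The prefix of length `k` of `u` is free in `F` if it puts no restriction on the entry at
position `k + 1`: with position `k` left open, every value of that entry occurs in `F`. -/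
def IsFree (F : Finset (ℕ → α)) (k : ℕ) (u : ℕ → α) : Prop :=
  ∀ y, ∃ v ∈ F, res v k = res u k ∧ v (k + 1) = y

instance [Fintype α] (F : Finset (ℕ → α)) (k : ℕ) : DecidablePred (IsFree F k) :=
  fun u => inferInstanceAs (Decidable (∀ y, ∃ v ∈ F, res v k = res u k ∧ v (k + 1) = y))

/-- The number of prefixes of length `k` that are not free. -/
def defect [Fintype α] (F : Finset (ℕ → α)) (k : ℕ) : ℕ :=
  #({u ∈ F | ¬ IsFree F k u}.image (res · k))

/-- All extensions in `F` of the prefix of length `k` of `u` stay free for lengths from `k` to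
`k + ℓ - 1`. -/
def IsFreeWindow (F : Finset (ℕ → α)) (k ℓ : ℕ) (u : ℕ → α) : Prop :=
  ∀ v ∈ F, res v k = res u k → ∀ j < ℓ, IsFree F (k + j) v

variable {F : Finset (ℕ → α)}

theorem prefixCount_mono : Monotone (prefixCount F) := fun _ _ hjk =>
  card_image_le_card_image_of_determines fun _ _ _ _ h => res_eq_res_of_le hjk h

theorem prefixCount_zero_le : prefixCount F 0 ≤ 1 :=
  card_le_one.2 fun _ hx _ hy => by
    obtain ⟨u, -, rfl⟩ := mem_image.1 hx
    obtain ⟨v, -, rfl⟩ := mem_image.1 hy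
    rfl

theorem prefixCount_succ_le [Fintype α] (k : ℕ) :
    prefixCount F (k + 1) ≤ Fintype.card α * prefixCount F k := by
  have hsum : prefixCount F (k + 1) ≤
      ∑ b ∈ F.image (res · k), #({u ∈ F | res u k = b}.image (· k)) :=
    card_image_le_sum_card_image_fiber fun u _ v _ h₁ h₂ => by
      rw [res_succ, res_succ, h₁, h₂]
  refine hsum.trans ((sum_le_card_nsmul _ _ _ fun b _ => card_le_univ _).trans_eq ?_)
  rw [smul_eq_mul, mul_comm, prefixCount]

theorem prefixCount_le_pow [Fintype α] (k : ℕ) : prefixCount F k ≤ Fintype.card α ^ k := by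
  induction k with
  | zero => simpa using prefixCount_zero_le
  | succ k ih =>
    rw [pow_succ']
    exact (prefixCount_succ_le k).trans (Nat.mul_le_mul_left _ ih)

theorem FollowsRule.card_le_prefixCount {g : ℕ → α → α → α} (hg : FollowsRule g F) {n k : ℕ}
    (hper : ∀ u ∈ F, u.Periodic n) (hn : 2 ≤ n) (hk : n ≤ k + 1) : #F ≤ prefixCount F k := by
  obtain ⟨m, rfl⟩ := Nat.exists_eq_add_of_le' hn
  refine (card_image_of_injOn fun u hu v hv huv => ?_).ge
  have hlt : ∀ t ≤ m, u t = v t := fun t ht => res_eq_res.1 huv (by omega)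
  have hlast : u (m + 1) = v (m + 1) := by
    rw [hg u hu, hg v hv, hlt m le_rfl, ← zero_add (m + 2), hper u hu, hper v hv, hlt 0 m.zero_le]
  funext t
  rw [← (hper u hu).map_mod_nat, ← (hper v hv).map_mod_nat]
  obtain ht | ht := (Nat.lt_succ_iff.1 (Nat.mod_lt t (m + 1).succ_pos)).lt_or_eq
  · exact hlt _ (Nat.lt_succ_iff.1 ht)
  · rw [ht, hlast]

theorem prefixCount_le_sum_defect [Fintype α] {k ℓ : ℕ} (h : ∀ u ∈ F, ¬ IsFreeWindow F k ℓ u) :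
    prefixCount F k ≤ ∑ j ∈ range ℓ, defect F (k + j) := by
  have hsub : F.image (res · k) ⊆
      (range ℓ).biUnion fun j => {v ∈ F | ¬ IsFree F (k + j) v}.image (res · k) := by
    intro w hw
    obtain ⟨u, hu, rfl⟩ := mem_image.1 hw
    have hnot := h u hu
    simp only [IsFreeWindow, not_forall] at hnot
    obtain ⟨v, hv, hvu, j, hj, hfree⟩ := hnot
    exact mem_biUnion.2 ⟨j, mem_range.2 hj, mem_image.2 ⟨v, mem_filter.2 ⟨hv, hfree⟩, hvu⟩⟩
  refine (card_le_card hsub).trans (card_biUnion_le.trans (sum_le_sum fun j _ => ?_))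
  exact card_image_le_card_image_of_determines fun _ _ _ _ => res_eq_res_of_le (k.le_add_right j)

namespace FollowsRule

variable [Fintype α] {g : ℕ → α → α → α}

theorem prefixCount_add_defect_le (hg : FollowsRule g F) (k : ℕ) :
    prefixCount F (k + 3) + defect F (k + 1) ≤ Fintype.card α * prefixCount F (k + 1) := by
  let next (b : List α) : Finset α := {u ∈ F | res u (k + 1) = b}.image (· (k + 2))
  let bad : Finset (List α) := {u ∈ F | ¬ IsFree F (k + 1) u}.image (res · (k + 1))
  have hbad : bad ⊆ F.image (res · (k + 1)) := image_subset_image (filter_subset _ _)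
  have hcount : prefixCount F (k + 3) ≤ ∑ b ∈ F.image (res · (k + 1)), #(next b) :=
    card_image_le_sum_card_image_fiber fun _ hu _ hv => hg.res_add_three_eq hu hv
  have hdefect : defect F (k + 1) = ∑ b ∈ F.image (res · (k + 1)), if b ∈ bad then 1 else 0 := by
    rw [sum_boole, filter_mem_eq_inter, inter_eq_right.2 hbad, Nat.cast_id]
    rfl
  have hnext (b : List α) : #(next b) + (if b ∈ bad then 1 else 0) ≤ Fintype.card α := by
    split_ifs with hb
    · obtain ⟨u, hu, rfl⟩ := mem_image.1 hb
      have hfree := (mem_filter.1 hu).2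
      simp only [IsFree, not_forall] at hfree
      obtain ⟨y, hy⟩ := hfree
      refine card_lt_univ_of_notMem (x := y) fun hmem => hy ?_
      simpa only [next, mem_image, mem_filter, and_assoc] using hmem
    · exact card_le_univ _
  calc prefixCount F (k + 3) + defect F (k + 1)
      ≤ ∑ b ∈ F.image (res · (k + 1)), (#(next b) + if b ∈ bad then 1 else 0) := by
        rw [sum_add_distrib, hdefect]
        exact Nat.add_le_add_right hcount _
    _ ≤ Fintype.card α * prefixCount F (k + 1) := by
        rw [mul_comm]
        exact sum_le_card_nsmul _ _ _ fun b _ => hnext b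

theorem prefixCount_add_two_mul_le (hg : FollowsRule g F) (k t : ℕ) :
    prefixCount F (k + 1 + 2 * t) ≤ Fintype.card α ^ t * prefixCount F (k + 1) := by
  induction t with
  | zero => simp
  | succ t ih =>
    calc prefixCount F (k + 1 + 2 * (t + 1))
        = prefixCount F (k + 2 * t + 3) := by congr 1; ring
      _ ≤ Fintype.card α * prefixCount F (k + 2 * t + 1) :=
          (Nat.le_add_right _ _).trans (hg.prefixCount_add_defect_le (k + 2 * t))
      _ ≤ Fintype.card α * (Fintype.card α ^ t * prefixCount F (k + 1)) := by
          rw [add_right_comm]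
          exact Nat.mul_le_mul_left _ ih
      _ = Fintype.card α ^ (t + 1) * prefixCount F (k + 1) := by rw [pow_succ', mul_assoc]

theorem prefixCount_two_le (hg : FollowsRule g F) {d : ℕ}
    (hd : ∀ x, #(univ.image (g 0 x)) ≤ d) : prefixCount F 2 ≤ Fintype.card α * d := by
  have hsum : prefixCount F 2 ≤ ∑ x ∈ F.image (· 0), #({u ∈ F | u 0 = x}.image (· 1)) :=
    card_image_le_sum_card_image_fiber fun u _ v _ h₀ h₁ => by
      simp only [PiNat.res, h₀, h₁]
  have hnext (x : α) : {u ∈ F | u 0 = x}.image (· 1) ⊆ univ.image (g 0 x) := by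
    intro z hz
    obtain ⟨u, hu, rfl⟩ := mem_image.1 hz
    obtain ⟨huF, rfl⟩ := mem_filter.1 hu
    exact mem_image.2 ⟨u 2, mem_univ _, (hg u huF 0).symm⟩
  calc prefixCount F 2 ≤ ∑ x ∈ F.image (· 0), #({u ∈ F | u 0 = x}.image (· 1)) := hsum
    _ ≤ #(F.image (· 0)) * d :=
        sum_le_card_nsmul _ _ _ fun x _ => (card_le_card (hnext x)).trans (hd x)
    _ ≤ Fintype.card α * d := Nat.mul_le_mul_right d (card_le_univ _)

end FollowsRule

end Sequences

section Windows

open Matrix PiNat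

variable {α : Type*}

section ReachMatrix

variable [Fintype α] [DecidableEq α]

/-- The 0-1 matrix of the relation that `z` is a value of `h x`, i.e. `z` is possible at a vertex
with rule `h` whose left neighbour has colour `x`. -/
def reachMatrix (h : α → α → α) : Matrix α α ℕ :=
  Matrix.of fun x z => if z ∈ univ.image (h x) then 1 else 0

theorem reachMatrix_mulVec_one (h : α → α → α) (x : α) :
    (reachMatrix h *ᵥ 1) x = #(univ.image (h x)) := by
  simp only [reachMatrix, mulVec, dotProduct, of_apply, Pi.one_apply, mul_one, sum_boole,
    filter_univ_mem, Nat.cast_id]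

theorem reachMatrix_mul_reachMatrix {h h' : α → α → α}
    (H : ∀ x y z, z ∈ univ.image (h x) → (h x y = z ↔ y ∈ univ.image (h' z))) :
    reachMatrix h * reachMatrix h' = vecMulVec 1 1 := by
  ext x y
  have huniq (z : α) : z ∈ univ.image (h x) ∧ y ∈ univ.image (h' z) ↔ h x y = z := by
    refine ⟨fun ⟨hz, hy⟩ => (H x y z hz).2 hy, ?_⟩
    rintro rfl
    have hmem : h x y ∈ univ.image (h x) := mem_image_of_mem _ (mem_univ y)
    exact ⟨hmem, (H x y _ hmem).1 rfl⟩
  simp only [reachMatrix, Matrix.mul_apply, of_apply, ← ite_and, mul_ite, mul_one, mul_zero,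
    and_comm (b := _ ∈ univ.image (h x)), huniq, sum_ite_eq, mem_univ, if_true, vecMulVec_apply,
    Pi.one_apply]

end ReachMatrix

variable {F : Finset (ℕ → α)} {g : ℕ → α → α → α} {k : ℕ} {u : ℕ → α}

theorem IsFreeWindow.shift {i ℓ ℓ' : ℕ} (h : IsFreeWindow F k ℓ u) (hi : i + ℓ' ≤ ℓ) :
    IsFreeWindow F (k + i) ℓ' u := fun v hv hvu j hj => by
  rw [add_assoc]
  exact h v hv (res_eq_res_of_le (k.le_add_right i) hvu) (i + j) (by omega)

theorem IsFreeWindow.exists_mem_eq (h : IsFreeWindow F k 4 u) (hu : u ∈ F) (x y : α) :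
    ∃ v ∈ F, res v k = res u k ∧ v (k + 1) = x ∧ v (k + 3) = y := by
  obtain ⟨v, hv, hvu, rfl⟩ := h u hu rfl 0 (by omega) x
  obtain ⟨w, hw, hwv, rfl⟩ := h v hv hvu 2 (by omega) y
  exact ⟨w, hw, (res_eq_res_of_le (by omega) hwv).trans hvu, res_eq_res.1 hwv (by omega), rfl⟩

variable [Fintype α] [DecidableEq α]

theorem IsFreeWindow.rule_eq_iff (h : IsFreeWindow F k 4 u) (hg : FollowsRule g F) (hu : u ∈ F)
    (x y z : α) (hz : z ∈ univ.image (g (k + 1) x)) :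
    g (k + 1) x y = z ↔ y ∈ univ.image (g (k + 2) z) := by
  constructor
  · rintro rfl
    obtain ⟨v, hv, -, rfl, rfl⟩ := h.exists_mem_eq hu x y
    exact mem_image.2 ⟨v (k + 4), mem_univ _, by rw [← hg v hv, ← hg v hv]⟩
  · intro hy
    obtain ⟨y', -, rfl⟩ := mem_image.1 hz
    obtain ⟨x', -, hx'⟩ := mem_image.1 hy
    obtain ⟨v, hv, hvu, rfl, rfl⟩ := h.exists_mem_eq hu x y'
    obtain ⟨w, hw, hwv, rfl⟩ := h v hv hvu 3 (by omega) x'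
    have hw₁ : w (k + 1) = v (k + 1) := res_eq_res.1 hwv (by omega)
    have hw₂ : w (k + 2) = v (k + 2) := res_eq_res.1 hwv (by omega)
    rw [← hg v hv, ← hw₂] at hx' ⊢
    rw [← hx', ← hg w hw, ← hw₁, ← hg w hw]

theorem IsFreeWindow.exists_forall_card_image_eq (h : IsFreeWindow F k 6 u) (hg : FollowsRule g F)
    (hu : u ∈ F) :
    ∃ p d, d ∣ Fintype.card α ∧ d * d ≤ Fintype.card α ∧ ∀ x, #(univ.image (g p x)) = d := by
  have : Nonempty α := ⟨u 0⟩
  have hmul i (hi : i + 4 ≤ 6) :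
      reachMatrix (g (k + i + 1)) * reachMatrix (g (k + i + 2)) = vecMulVec 1 1 :=
    reachMatrix_mul_reachMatrix ((h.shift hi).rule_eq_iff hg hu)
  obtain ⟨d₁, d₂, hd, hrow₁, hrow₂⟩ := exists_mulVec_one_eq_of_mul_eq_allOnes
    (hmul 0 (by omega)) (hmul 1 (by omega)) (hmul 2 (by omega))
  simp only [reachMatrix_mulVec_one] at hrow₁ hrow₂
  rw [Nat.cast_id] at hd
  obtain hle | hle := le_total d₁ d₂
  · exact ⟨_, d₁, ⟨d₂, hd.symm⟩, hd ▸ Nat.mul_le_mul_left d₁ hle, hrow₁⟩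
  · exact ⟨_, d₂, ⟨d₁, by rw [← hd, mul_comm]⟩, hd ▸ Nat.mul_le_mul_right d₂ hle, hrow₂⟩

end Windows

section Decay

theorem exists_forall_antitone_le_mul {ρ ε : ℝ} (hρ₀ : 0 ≤ ρ) (hρ₁ : ρ < 1) (hε : 0 < ε) (ℓ : ℕ) :
    ∃ K, ∀ Φ : ℕ → ℝ, Antitone Φ → 0 ≤ Φ 0 → (∀ k, Φ (k + ℓ) ≤ ρ * Φ k) →
      ∀ k, K ≤ k → Φ k ≤ ε * Φ 0 := by
  obtain ⟨q, hq⟩ := exists_pow_lt_of_lt_one hε hρ₁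
  refine ⟨q * ℓ, fun Φ hanti h₀ hcontr k hk => ?_⟩
  have hiter : ∀ i, Φ (i * ℓ) ≤ ρ ^ i * Φ 0 := by
    intro i
    induction i with
    | zero => simp
    | succ i ih =>
      calc Φ ((i + 1) * ℓ) = Φ (i * ℓ + ℓ) := by rw [Nat.succ_mul]
        _ ≤ ρ * (ρ ^ i * Φ 0) := (hcontr _).trans (mul_le_mul_of_nonneg_left ih hρ₀)
        _ = ρ ^ (i + 1) * Φ 0 := by ring
  calc Φ k ≤ Φ (q * ℓ) := hanti hk
    _ ≤ ρ ^ q * Φ 0 := hiter q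
    _ ≤ ε * Φ 0 := mul_le_mul_of_nonneg_right hq.le h₀

variable {α : Type*} [Fintype α] [DecidableEq α]

/-- The normalised product `P k * P (k + 1) / s ^ k` of consecutive prefix counts, which a local
rule makes nonincreasing in `k ≥ 1`. -/
noncomputable def prefixPotential (F : Finset (ℕ → α)) (k : ℕ) : ℝ :=
  prefixCount F k * prefixCount F (k + 1) / (Fintype.card α : ℝ) ^ k

variable {F : Finset (ℕ → α)} {g : ℕ → α → α → α}

theorem prefixPotential_nonneg (k : ℕ) : 0 ≤ prefixPotential F k := by
  unfold prefixPotential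
  positivity

variable [Nonempty α]

theorem prefixPotential_one_le : prefixPotential F 1 ≤ (Fintype.card α : ℝ) ^ 2 := by
  have h (k : ℕ) : (prefixCount F k : ℝ) ≤ (Fintype.card α : ℝ) ^ k := by
    exact_mod_cast prefixCount_le_pow k
  rw [prefixPotential, div_le_iff₀ (by positivity), mul_comm]
  gcongr
  exacts [h 2, h 1]

namespace FollowsRule

theorem prefixPotential_add_le (hg : FollowsRule g F) (k : ℕ) :
    prefixPotential F (k + 2) +
        prefixCount F (k + 2) * defect F (k + 1) / (Fintype.card α : ℝ) ^ (k + 2) ≤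
      prefixPotential F (k + 1) := by
  have hstep : (prefixCount F (k + 3) : ℝ) + defect F (k + 1) ≤
      Fintype.card α * prefixCount F (k + 1) := by
    exact_mod_cast hg.prefixCount_add_defect_le k
  calc prefixPotential F (k + 2) +
        prefixCount F (k + 2) * defect F (k + 1) / (Fintype.card α : ℝ) ^ (k + 2)
      = prefixCount F (k + 2) * (prefixCount F (k + 3) + defect F (k + 1)) /
          (Fintype.card α : ℝ) ^ (k + 2) := by
        rw [prefixPotential, ← add_div, ← mul_add]
    _ ≤ prefixCount F (k + 2) * (Fintype.card α * prefixCount F (k + 1)) /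
          (Fintype.card α : ℝ) ^ (k + 2) := by gcongr
    _ = prefixPotential F (k + 1) := by
        rw [prefixPotential]
        field_simp
        ring

theorem antitone_prefixPotential_succ (hg : FollowsRule g F) :
    Antitone fun k => prefixPotential F (k + 1) :=
  antitone_nat_of_succ_le fun k =>
    (le_add_of_nonneg_right (by positivity)).trans (hg.prefixPotential_add_le k)

theorem prefixPotential_add_window_le (hg : FollowsRule g F) {k ℓ : ℕ}
    (h : ∀ u ∈ F, ¬ IsFreeWindow F (k + 1) ℓ u) :
    prefixPotential F (k + ℓ + 1) ≤
      (1 - 1 / (Fintype.card α : ℝ) ^ ℓ) * prefixPotential F (k + 1) := by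
  have hcard : (1 : ℝ) ≤ Fintype.card α := by exact_mod_cast Fintype.card_pos
  have hdefect : (prefixCount F (k + 1) : ℝ) ≤ ∑ j ∈ range ℓ, (defect F (k + j + 1) : ℝ) := by
    have hsum := prefixCount_le_sum_defect h
    simp only [add_right_comm k 1] at hsum
    exact_mod_cast hsum
  have hloss : ∀ j ∈ range ℓ, prefixCount F (k + 2) * defect F (k + j + 1) /
      (Fintype.card α : ℝ) ^ (k + 1 + ℓ) ≤
        prefixPotential F (k + j + 1) - prefixPotential F (k + j + 2) := by
    intro j hj
    have hj := mem_range.1 hj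
    refine le_trans ?_ (le_sub_iff_add_le'.2 (hg.prefixPotential_add_le (k + j)))
    have hcount : (prefixCount F (k + 2) : ℝ) ≤ prefixCount F (k + j + 2) :=
      Nat.cast_le.2 (prefixCount_mono (by omega))
    have hpow : (Fintype.card α : ℝ) ^ (k + j + 2) ≤ (Fintype.card α : ℝ) ^ (k + 1 + ℓ) :=
      pow_le_pow_right₀ hcard (by omega)
    exact div_le_div₀ (by positivity) (mul_le_mul_of_nonneg_right hcount (by positivity))
      (by positivity) hpow
  have htotal : prefixPotential F (k + 1) / (Fintype.card α : ℝ) ^ ℓ ≤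
      prefixPotential F (k + 1) - prefixPotential F (k + ℓ + 1) := by
    calc prefixPotential F (k + 1) / (Fintype.card α : ℝ) ^ ℓ
        = prefixCount F (k + 2) * prefixCount F (k + 1) /
            (Fintype.card α : ℝ) ^ (k + 1 + ℓ) := by
          rw [prefixPotential, div_div, ← pow_add, mul_comm (prefixCount F (k + 1) : ℝ)]
      _ ≤ prefixCount F (k + 2) * (∑ j ∈ range ℓ, (defect F (k + j + 1) : ℝ)) /
            (Fintype.card α : ℝ) ^ (k + 1 + ℓ) := by gcongr
      _ = ∑ j ∈ range ℓ, prefixCount F (k + 2) * defect F (k + j + 1) /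
            (Fintype.card α : ℝ) ^ (k + 1 + ℓ) := by rw [mul_sum, sum_div]
      _ ≤ ∑ j ∈ range ℓ, (prefixPotential F (k + j + 1) - prefixPotential F (k + j + 2)) :=
          sum_le_sum hloss
      _ = prefixPotential F (k + 1) - prefixPotential F (k + ℓ + 1) :=
          sum_range_sub' (fun j => prefixPotential F (k + j + 1)) ℓ
  linear_combination htotal

end FollowsRule

theorem exists_forall_prefixPotential_le_one (α : Type*) [Fintype α] [DecidableEq α] [Nonempty α]
    (ℓ : ℕ) :
    ∃ K, ∀ (g : ℕ → α → α → α) (F : Finset (ℕ → α)), FollowsRule g F →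
      (∀ k, ∀ u ∈ F, ¬ IsFreeWindow F k ℓ u) → ∀ k, K ≤ k → prefixPotential F (k + 1) ≤ 1 := by
  have hcard : (1 : ℝ) ≤ Fintype.card α := by exact_mod_cast Fintype.card_pos
  have hpow : (1 : ℝ) ≤ (Fintype.card α : ℝ) ^ ℓ := one_le_pow₀ hcard
  obtain ⟨K, hK⟩ := exists_forall_antitone_le_mul (ρ := 1 - 1 / (Fintype.card α : ℝ) ^ ℓ)
    (ε := 1 / (Fintype.card α : ℝ) ^ 2) (sub_nonneg.2 (div_le_one_of_le₀ hpow (by positivity)))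
    (sub_lt_self 1 (by positivity)) (by positivity) ℓ
  refine ⟨K, fun g F hg hwindow k hk => ?_⟩
  calc prefixPotential F (k + 1)
      ≤ 1 / (Fintype.card α : ℝ) ^ 2 * prefixPotential F 1 :=
        hK (fun k => prefixPotential F (k + 1)) hg.antitone_prefixPotential_succ
          (prefixPotential_nonneg 1)
          (fun k => hg.prefixPotential_add_window_le (hwindow (k + 1))) k hk
    _ ≤ 1 / (Fintype.card α : ℝ) ^ 2 * (Fintype.card α : ℝ) ^ 2 := by
        gcongr
        exact prefixPotential_one_le
    _ = 1 := by field_simp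

end Decay

section UpperBounds

/-- The colours read around the cycle from vertex `i` on, as an infinite sequence. -/
def unroll {α : Type*} {n : ℕ} [NeZero n] (i : ZMod n) : (ZMod n → α) ↪ (ℕ → α) where
  toFun c t := c (i + t)
  inj' c c' h := funext fun j => by
    simpa only [ZMod.natCast_zmod_val, add_sub_cancel] using congrFun h (j - i).val

@[simp]
theorem unroll_apply {α : Type*} {n : ℕ} [NeZero n] (i : ZMod n) (c : ZMod n → α) (t : ℕ) :
    unroll i c t = c (i + t) := rfl

variable {n s : ℕ} [NeZero n]

/-- The fixed colourings of `f`, unrolled from vertex `i` on. -/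
def unrolledFix (f : ZMod n → Fin s × Fin s → Fin s) (i : ZMod n) : Finset (ℕ → Fin s) :=
  (cycleFix n s f).map (unroll i)

theorem card_unrolledFix (f : ZMod n → Fin s × Fin s → Fin s) (i : ZMod n) :
    #(unrolledFix f i) = #(cycleFix n s f) := card_map _

theorem followsRule_unrolledFix (f : ZMod n → Fin s × Fin s → Fin s) (i : ZMod n) :
    FollowsRule (fun t x y => f (i + t + 1) (x, y)) (unrolledFix f i) := by
  intro u hu t
  obtain ⟨c, hc, rfl⟩ := mem_map.1 hu
  have hfix := (mem_filter.1 hc).2 (i + t + 1)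
  rw [add_sub_cancel_right] at hfix
  simpa only [unroll_apply, Nat.cast_add, Nat.cast_one, Nat.cast_ofNat, add_assoc,
    one_add_one_eq_two] using hfix

theorem card_cycleFix_le_prefixCount (f : ZMod n → Fin s × Fin s → Fin s) (i : ZMod n) {k : ℕ}
    (hn : 2 ≤ n) (hk : n ≤ k + 1) : #(cycleFix n s f) ≤ prefixCount (unrolledFix f i) k := by
  rw [← card_unrolledFix f i]
  refine (followsRule_unrolledFix f i).card_le_prefixCount (fun u hu t => ?_) hn hk
  obtain ⟨c, -, rfl⟩ := mem_map.1 hu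
  simp only [unroll_apply, Nat.cast_add, CharP.cast_eq_zero, add_zero]

theorem card_cycleFix_le_of_even (he : Even n)
    (f : ZMod n → Fin s × Fin s → Fin s) : #(cycleFix n s f) ≤ s ^ (n / 2) := by
  obtain ⟨m, hm⟩ := he
  have hn : 2 ≤ n := by
    have := NeZero.ne n
    omega
  calc #(cycleFix n s f)
      ≤ prefixCount (unrolledFix f 0) (0 + 1 + 2 * (n / 2 - 1)) :=
        card_cycleFix_le_prefixCount f 0 hn (by omega)
    _ ≤ s ^ (n / 2 - 1) * s ^ 1 := by
        refine ((followsRule_unrolledFix f 0).prefixCount_add_two_mul_le 0 _).trans ?_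
        rw [Fintype.card_fin]
        exact Nat.mul_le_mul_left _ ((prefixCount_le_pow 1).trans_eq (by rw [Fintype.card_fin]))
    _ = s ^ (n / 2) := by rw [← pow_add]; congr 1; omega

theorem card_cycleFix_le_of_card_image_le (hn : 3 ≤ n) (ho : Odd n)
    (f : ZMod n → Fin s × Fin s → Fin s) {i : ZMod n} {d : ℕ}
    (hd : ∀ x, #(univ.image fun y => f i (x, y)) ≤ d) :
    #(cycleFix n s f) ≤ d * s ^ ((n - 1) / 2) := by
  obtain ⟨m, hm⟩ := ho
  have hfollow := followsRule_unrolledFix f (i - 1)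
  have htwo : prefixCount (unrolledFix f (i - 1)) 2 ≤ s * d := by
    simpa only [Fintype.card_fin] using hfollow.prefixCount_two_le (d := d) (by simpa using hd)
  calc #(cycleFix n s f)
      ≤ prefixCount (unrolledFix f (i - 1)) (1 + 1 + 2 * ((n - 1) / 2 - 1)) :=
        card_cycleFix_le_prefixCount f (i - 1) (by omega) (by omega)
    _ ≤ s ^ ((n - 1) / 2 - 1) * (s * d) := by
        refine (hfollow.prefixCount_add_two_mul_le 1 _).trans ?_
        rw [Fintype.card_fin]
        exact Nat.mul_le_mul_left _ htwo
    _ = d * s ^ ((n - 1) / 2 - 1 + 1) := by ring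
    _ = d * s ^ ((n - 1) / 2) := by congr 2; omega

theorem card_cycleFix_le_of_prefixPotential_le_one (hn : 2 ≤ n) (ho : Odd n) (hs : s ≠ 0)
    (f : ZMod n → Fin s × Fin s → Fin s) (i : ZMod n)
    (h : prefixPotential (unrolledFix f i) (n - 1) ≤ 1) :
    #(cycleFix n s f) ≤ s ^ ((n - 1) / 2) := by
  obtain ⟨m, hm⟩ := ho
  have hprod : prefixCount (unrolledFix f i) (n - 1) * prefixCount (unrolledFix f i) (n - 1 + 1) ≤
      s ^ (n - 1) := by
    rw [prefixPotential, Fintype.card_fin, div_le_one (by positivity)] at h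
    exact_mod_cast h
  have hsq : #(cycleFix n s f) ^ 2 ≤ (s ^ ((n - 1) / 2)) ^ 2 := by
    calc #(cycleFix n s f) ^ 2
        ≤ prefixCount (unrolledFix f i) (n - 1) * prefixCount (unrolledFix f i) (n - 1 + 1) := by
          rw [sq]
          exact Nat.mul_le_mul (card_cycleFix_le_prefixCount f i hn (by omega))
            (card_cycleFix_le_prefixCount f i hn (by omega))
      _ ≤ s ^ (n - 1) := hprod
      _ = (s ^ ((n - 1) / 2)) ^ 2 := by rw [← pow_mul]; congr 1; omega
  exact (Nat.pow_le_pow_iff_left two_ne_zero).1 hsq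

theorem exists_forall_card_cycleFix_le {s a : ℕ} (hs : s ≠ 0)
    (ha : ∀ d : ℕ, d ∣ s → d * d ≤ s → d ≤ a) :
    ∃ N : ℕ, ∀ (n : ℕ) [NeZero n], N < n → Odd n →
      ∀ f : ZMod n → Fin s × Fin s → Fin s, #(cycleFix n s f) ≤ a * s ^ ((n - 1) / 2) := by
  have : NeZero s := ⟨hs⟩
  obtain ⟨K, hK⟩ := exists_forall_prefixPotential_le_one (Fin s) 6
  refine ⟨K + 2, fun n _ hn ho f => ?_⟩
  have hfollow := followsRule_unrolledFix f 0
  by_cases hwindow : ∃ k, ∃ u ∈ unrolledFix f 0, IsFreeWindow (unrolledFix f 0) k 6 u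
  · obtain ⟨k, u, hu, hfree⟩ := hwindow
    obtain ⟨p, d, hdvd, hle, hdeg⟩ := hfree.exists_forall_card_image_eq hfollow hu
    rw [Fintype.card_fin] at hdvd hle
    exact card_cycleFix_le_of_card_image_le (by omega) ho f
      fun x => (hdeg x).trans_le (ha d hdvd hle)
  · have hpot : prefixPotential (unrolledFix f 0) (n - 1) ≤ 1 := by
      have := hK _ _ hfollow (fun k u hu hfree => hwindow ⟨k, u, hu, hfree⟩) (n - 2) (by omega)
      rwa [show n - 2 + 1 = n - 1 by omega] at this
    exact (card_cycleFix_le_of_prefixPotential_le_one (by omega) ho hs f 0 hpot).trans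
      (Nat.le_mul_of_pos_left _ (ha 1 (one_dvd s) (Nat.one_le_iff_ne_zero.2 hs)))

end UpperBounds

section LowerBounds

variable {s : ℕ}

theorem comp_val_mem_cycleFix {m : ℕ} {f : ZMod (m + 2) → Fin s × Fin s → Fin s} {u : ℕ → Fin s}
    (hfirst : u 0 = f 0 (u (m + 1), u 1))
    (hmid : ∀ k < m, u (k + 1) = f (k + 1 : ℕ) (u k, u (k + 2)))
    (hlast : u (m + 1) = f (m + 1 : ℕ) (u m, u 0)) :
    (fun i => u i.val) ∈ cycleFix (m + 2) s f := by
  refine mem_filter.2 ⟨mem_univ _, fun i => ?_⟩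
  obtain ⟨k, hk, hik⟩ : ∃ k < m + 2, i - 1 = (k : ZMod (m + 2)) :=
    ⟨(i - 1).val, ZMod.val_lt _, (ZMod.natCast_zmod_val _).symm⟩
  obtain rfl : i = (k + 1 : ℕ) := by rw [Nat.cast_succ, ← hik, sub_add_cancel]
  have hnext : ((k + 1 : ℕ) : ZMod (m + 2)) + 1 = (k + 2 : ℕ) := by push_cast; ring
  rw [hik, hnext]
  simp only [ZMod.val_natCast]
  obtain hk | rfl | rfl : k < m ∨ k = m ∨ k = m + 1 := by omega
  · have hmod {t : ℕ} (ht : t < m + 2) : t % (m + 2) = t := Nat.mod_eq_of_lt ht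
    simpa only [hmod (by omega : k < m + 2), hmod (by omega : k + 1 < m + 2),
      hmod (by omega : k + 2 < m + 2)] using hmid k hk
  · simpa only [Nat.mod_self, Nat.mod_eq_of_lt (by omega : k < k + 2),
      Nat.mod_eq_of_lt (by omega : k + 1 < k + 2)] using hlast
  · have hone : (m + 1 + 2) % (m + 2) = 1 := by
      rw [add_right_comm, Nat.add_mod_left, Nat.mod_eq_of_lt (by omega)]
    simpa only [hone, Nat.mod_self, Nat.mod_eq_of_lt (by omega : m + 1 < m + 2), CharP.cast_eq_zero]
      using hfirst

/-- The protocol of the perfect matching `{2 * t, 2 * t + 1}` of an even cycle: every vertex guesses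
the colour of its partner. -/
def matchingProtocol (n s : ℕ) : ZMod n → Fin s × Fin s → Fin s :=
  fun i p => if i.val % 2 = 0 then p.2 else p.1

theorem matching_mem_cycleFix {l : ℕ} (w : ℕ → Fin s) :
    (fun i => w (i.val / 2)) ∈ cycleFix (2 * l + 2) s (matchingProtocol (2 * l + 2) s) := by
  have hval {k : ℕ} (hk : k < 2 * l + 2) : (k : ZMod (2 * l + 2)).val = k :=
    ZMod.val_natCast_of_lt hk
  refine comp_val_mem_cycleFix (u := fun k => w (k / 2)) ?_ (fun k hk => ?_) ?_
  · simp [matchingProtocol]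
  · rw [matchingProtocol, hval (by omega)]
    split_ifs with hpar
    · rw [show (k + 1) / 2 = (k + 2) / 2 by omega]
    · rw [show (k + 1) / 2 = k / 2 by omega]
  · rw [matchingProtocol, hval (by omega), if_neg (by omega),
      show (2 * l + 1) / 2 = 2 * l / 2 by omega]

theorem pow_le_card_cycleFix_matchingProtocol {n : ℕ} [NeZero n] (he : Even n) :
    s ^ (n / 2) ≤ #(cycleFix n s (matchingProtocol n s)) := by
  obtain ⟨l, rfl⟩ : ∃ l, n = 2 * l + 2 := by
    obtain ⟨_ | l, rfl⟩ := he
    · exact absurd rfl (NeZero.ne 0)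
    · exact ⟨l, by ring⟩
  let c (w : Fin (l + 1) → Fin s) (i : ZMod (2 * l + 2)) : Fin s := w (Fin.ofNat _ (i.val / 2))
  have hinj : Function.Injective c := by
    intro w w' h
    funext t
    have ht := congrFun h ((2 * t.val : ℕ) : ZMod (2 * l + 2))
    simp only [c] at ht
    rwa [ZMod.val_natCast_of_lt (by omega), Nat.mul_div_cancel_left _ two_pos,
      Fin.ofNat_val_eq_self] at ht
  calc s ^ ((2 * l + 2) / 2) = #(univ : Finset (Fin (l + 1) → Fin s)) := by
        rw [card_univ, Fintype.card_fun, Fintype.card_fin, Fintype.card_fin]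
        congr 1
        omega
    _ ≤ #(cycleFix (2 * l + 2) s (matchingProtocol (2 * l + 2) s)) :=
        card_le_card_of_injOn c (fun w _ => matching_mem_cycleFix fun k => w (Fin.ofNat _ k))
          hinj.injOn

theorem isGreatest_card_cycleFix_of_even {n : ℕ} [NeZero n] (he : Even n) :
    IsGreatest {m : ℕ | ∃ f : ZMod n → Fin s × Fin s → Fin s, #(cycleFix n s f) = m}
      (s ^ (n / 2)) := by
  refine ⟨⟨matchingProtocol n s, (card_cycleFix_le_of_even he _).antisymm
    (pow_le_card_cycleFix_matchingProtocol he)⟩, ?_⟩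
  rintro _ ⟨f, rfl⟩
  exact card_cycleFix_le_of_even he f

section FractionalCliquePartition

variable {a b : ℕ} (π : ZMod a × ZMod b ≃ Fin s)

/-- First coordinates of a fixed colouring of `fcpProtocol`: the free choice `x` at vertex `0`, then
that of the free colour `w t` at the vertices `2 * t + 1` and `2 * t + 2`. -/
def fcpFirst (x : ZMod a) (w : ℕ → Fin s) : ℕ → ZMod a
  | 0 => x
  | k + 1 => fcpPhi π (w (k / 2))

/-- Second coordinates of a fixed colouring of `fcpProtocol` on `C_n` with `n = 2 * l + 3`: vertex
`1` carries `x`, and the vertices `2 * t + 2` and `2 * t + 3` (modulo `n`) that of the free colour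
`w t`. -/
def fcpSecond (l : ℕ) (x : ZMod a) (w : ℕ → Fin s) : ℕ → ZMod b
  | 0 => fcpPsi π (w l)
  | 1 => (x.val : ZMod b)
  | k + 2 => fcpPsi π (w (k / 2))

/-- The fixed colouring of `fcpProtocol` on the cycle of length `2 * l + 3` in which vertex
`2 * t + 2` has colour `w t` and the first coordinate of vertex `0` is `x`. -/
def fcpColouring (l : ℕ) (x : ZMod a) (w : ℕ → Fin s) : ZMod (2 * l + 3) → Fin s :=
  fun i => π (fcpFirst π x w i.val, fcpSecond π l x w i.val)

theorem fcpPhi_apply (p : ZMod a × ZMod b) : fcpPhi π (π p) = p.1 := by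
  rw [fcpPhi, π.symm_apply_apply]

theorem fcpPsi_apply (p : ZMod a × ZMod b) : fcpPsi π (π p) = p.2 := by
  rw [fcpPsi, π.symm_apply_apply]

theorem fcpColouring_zero (l : ℕ) (x : ZMod a) (w : ℕ → Fin s) :
    fcpColouring π l x w 0 = π (x, fcpPsi π (w l)) := by
  simp [fcpColouring, fcpFirst, fcpSecond]

theorem fcpColouring_even {l t : ℕ} (ht : t ≤ l) (x : ZMod a) (w : ℕ → Fin s) :
    fcpColouring π l x w (2 * t + 2 : ℕ) = w t := by
  have hhalf : (2 * t + 1) / 2 = t := by omega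
  rw [fcpColouring, ZMod.val_natCast_of_lt (by omega), fcpFirst, fcpSecond, hhalf,
    Nat.mul_div_cancel_left _ two_pos]
  exact π.apply_symm_apply _

theorem fcpColouring_injective [NeZero a] (l : ℕ) :
    Function.Injective fun p : ZMod a × (Fin (l + 1) → Fin s) =>
      fcpColouring π l p.1 fun k => p.2 (Fin.ofNat _ k) := by
  rintro ⟨x, w⟩ ⟨x', w'⟩ h
  have hx : x = x' := by
    have hzero := congrFun h 0
    simp only [fcpColouring_zero] at hzero
    exact congrArg Prod.fst (π.injective hzero)
  have hw : w = w' := by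
    funext t
    have heven := congrFun h (2 * t + 2 : ℕ)
    simp only [fcpColouring_even π (Nat.lt_succ_iff.1 t.isLt), Fin.ofNat_val_eq_self] at heven
    exact heven
  rw [hx, hw]

theorem fcpFirst_odd_eq_even (x : ZMod a) (w : ℕ → Fin s) (t : ℕ) :
    fcpFirst π x w (2 * t + 1) = fcpFirst π x w (2 * t + 2) := by
  rw [fcpFirst, fcpFirst, show (2 * t + 1) / 2 = 2 * t / 2 by omega]

theorem fcpSecond_even_eq_odd (l : ℕ) (x : ZMod a) (w : ℕ → Fin s) (t : ℕ) :
    fcpSecond π l x w (2 * t + 2) = fcpSecond π l x w (2 * t + 3) := by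
  rw [fcpSecond, fcpSecond, show (2 * t + 1) / 2 = 2 * t / 2 by omega]

theorem fcpSecond_last_eq_zero (l : ℕ) (x : ZMod a) (w : ℕ → Fin s) :
    fcpSecond π l x w (2 * l + 2) = fcpSecond π l x w 0 := by
  rw [fcpSecond, fcpSecond, Nat.mul_div_cancel_left _ two_pos]

theorem fcpColouring_mem_cycleFix [NeZero a] (hab : a ≤ b) (l : ℕ) (x : ZMod a) (w : ℕ → Fin s) :
    fcpColouring π l x w ∈ cycleFix (2 * l + 3) s (fcpProtocol (2 * l + 3) s a b π) := by
  have hval {k : ℕ} (hk : k < 2 * l + 3) : (k : ZMod (2 * l + 3)).val = k :=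
    ZMod.val_natCast_of_lt hk
  refine comp_val_mem_cycleFix (m := 2 * l + 1)
    (u := fun k => π (fcpFirst π x w k, fcpSecond π l x w k)) ?_ (fun k hk => ?_) ?_
  · have hback : ((x.val : ZMod b).val : ZMod a) = x := by
      rw [ZMod.val_natCast_of_lt (x.val_lt.trans_le hab), ZMod.natCast_zmod_val]
    rw [fcpProtocol, ZMod.val_zero, if_neg zero_ne_one, if_pos rfl]
    simp only [fcpPsi_apply, fcpSecond_last_eq_zero]
    rw [fcpSecond.eq_2, hback, fcpFirst]
  · rw [fcpProtocol, hval (by omega)]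
    simp only [fcpPhi_apply, fcpPsi_apply]
    obtain rfl | ⟨t, rfl | rfl⟩ : k = 0 ∨ ∃ t, k = 2 * t + 1 ∨ k = 2 * t + 2 := by
      obtain ⟨t, rfl | rfl⟩ := k.even_or_odd'
      · cases t with
        | zero => exact .inl rfl
        | succ t => exact .inr ⟨t, .inr rfl⟩
      · exact .inr ⟨t, .inl rfl⟩
    · rw [if_pos rfl, ← fcpFirst_odd_eq_even π x w 0, fcpFirst, fcpFirst, fcpSecond]
    · rw [if_neg (by omega), if_neg (by omega), if_pos (by omega), fcpFirst_odd_eq_even,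
        ← fcpSecond_even_eq_odd]
    · rw [if_neg (by omega), if_neg (by omega), if_neg (by omega), fcpSecond_even_eq_odd]
      exact congrArg (fun z => π (z, _)) (fcpFirst_odd_eq_even π x w (t + 1))
  · rw [fcpProtocol, hval (by omega), if_neg (by omega), if_neg (by omega), if_pos (by omega)]
    simp only [fcpPhi_apply, fcpPsi_apply]
    rw [fcpFirst_odd_eq_even, fcpSecond_last_eq_zero]

theorem card_image_fcpProtocol_one_le {n : ℕ} [NeZero n] [NeZero a] (hn : 2 ≤ n) (x : Fin s) :
    #(univ.image fun y => fcpProtocol n s a b π 1 (x, y)) ≤ a := by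
  have : Fact (1 < n) := ⟨hn⟩
  have hsub : (univ.image fun y => fcpProtocol n s a b π 1 (x, y)) ⊆
      univ.image fun z : ZMod a => π (z, ((fcpPhi π x).val : ZMod b)) := by
    intro c hc
    obtain ⟨y, -, rfl⟩ := mem_image.1 hc
    rw [fcpProtocol, if_pos (ZMod.val_one n)]
    exact mem_image_of_mem _ (mem_univ _)
  exact (card_le_card hsub).trans (card_image_le.trans_eq (ZMod.card a))

theorem card_cycleFix_fcpProtocol {n : ℕ} [NeZero n] [NeZero a] (hn : 3 ≤ n) (ho : Odd n)
    (hab : a ≤ b) : #(cycleFix n s (fcpProtocol n s a b π)) = a * s ^ ((n - 1) / 2) := by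
  refine (card_cycleFix_le_of_card_image_le hn ho _
    (card_image_fcpProtocol_one_le π (by omega))).antisymm ?_
  obtain ⟨l, rfl⟩ : ∃ l, n = 2 * l + 3 := by
    obtain ⟨m, hm⟩ := ho
    exact ⟨m - 1, by omega⟩
  calc a * s ^ ((2 * l + 3 - 1) / 2) = #(univ : Finset (ZMod a × (Fin (l + 1) → Fin s))) := by
        rw [card_univ, Fintype.card_prod, ZMod.card, Fintype.card_fun, Fintype.card_fin,
          Fintype.card_fin]
        congr 2
        omega
    _ ≤ #(cycleFix (2 * l + 3) s (fcpProtocol (2 * l + 3) s a b π)) :=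
        card_le_card_of_injOn _ (fun p _ => fcpColouring_mem_cycleFix π hab l p.1 _)
          (fcpColouring_injective π l).injOn

end FractionalCliquePartition

end LowerBounds

/-- For every integer `s ≥ 2`, let `a` be the greatest divisor of
`s` with `a ≤ √s`.  Then for every even `n ≥ 4` the maximum of `fix(P)` over all
protocols `P` on `C_n` with `s` colours is `s^{n/2}` (i.e. `gn(C_n,s) = n/2`); and
there is an `N` such that for every odd `n > N` the maximum of `fix(P)` is
`a · s^{(n-1)/2}` (i.e. `gn(C_n,s) = (n-1)/2 + log_s a`), and this maximum is
attained by the fractional-clique-partition protocol `P_fcp`. -/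
theorem cycle_guessing_stmt18 (s a : ℕ) (hs : 2 ≤ s)
    (ha : a ∣ s ∧ a * a ≤ s ∧ ∀ d : ℕ, d ∣ s → d * d ≤ s → d ≤ a) :
    (∀ (n : ℕ) [NeZero n], 4 ≤ n → Even n →
      IsGreatest {m : ℕ | ∃ f : ZMod n → Fin s × Fin s → Fin s,
        (cycleFix n s f).card = m} (s ^ (n / 2))) ∧
    ∃ N : ℕ, ∀ (n : ℕ) [NeZero n], N < n → Odd n →
      IsGreatest {m : ℕ | ∃ f : ZMod n → Fin s × Fin s → Fin s,
        (cycleFix n s f).card = m} (a * s ^ ((n - 1) / 2)) ∧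
      ∀ π : ZMod a × ZMod (s / a) ≃ Fin s,
        (cycleFix n s (fcpProtocol n s a (s / a) π)).card = a * s ^ ((n - 1) / 2) := by
  obtain ⟨⟨b, rfl⟩, hsq, hmax⟩ := ha
  have ha₀ : 0 < a := Nat.pos_of_mul_pos_right (by omega : 0 < a * b)
  have hb₀ : 0 < b := Nat.pos_of_mul_pos_left (by omega : 0 < a * b)
  have hab : a ≤ b := Nat.le_of_mul_le_mul_left hsq ha₀
  have : NeZero a := ⟨ha₀.ne'⟩
  have : NeZero b := ⟨hb₀.ne'⟩
  rw [Nat.mul_div_cancel_left b ha₀]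
  refine ⟨fun n _ _ he => isGreatest_card_cycleFix_of_even he, ?_⟩
  obtain ⟨N, hN⟩ := exists_forall_card_cycleFix_le (by omega) hmax
  refine ⟨N + 2, fun n _ hn ho => ?_⟩
  have hfcp (π : ZMod a × ZMod b ≃ Fin (a * b)) :=
    card_cycleFix_fcpProtocol π (by omega : 3 ≤ n) ho hab
  have hcard : Fintype.card (ZMod a × ZMod b) = Fintype.card (Fin (a * b)) := by
    rw [Fintype.card_prod, ZMod.card, ZMod.card, Fintype.card_fin]
  refine ⟨⟨⟨_, hfcp (Fintype.equivOfCardEq hcard)⟩, ?_⟩, hfcp⟩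
  rintro _ ⟨f, rfl⟩
  exact hN n (by omega) ho f
end

section
/- For every integer s ≥ 2, let b be the smallest divisor of s with b ≥ √s. There exists a natural number N such that for every odd integer n > N, the chromatic number of the confusion graph 𝔠_s(C_n) equals b · s^{(n−1)/2}; equivalently, the information defect satisfies β(C_n, s) = (n−1)/2 + log_s b. -/
/-!
Write `n = 2 * k + 1` and `s = a * b`. The cycle is viewed as a guessing game: a set of colourings
is independent in the confusion graph iff the colour of each vertex is a function `f` of the colours
of its two neighbours, so an independent set consists of colourings won by the strategy `f`. Since
the colours of `k + 1` alternate vertices determine a won colouring, there are at most `s ^ (k + 1)`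
of them, and the point is to improve this to `a * s ^ k`; as the graph has `s ^ n` vertices, at
least `b * s ^ k` classes are then needed.

* If eight consecutive vertices are consistent, i.e. guess correctly whenever both neighbours have
  the colours that they guess, the numbers of colour pairs attainable on two nearby edges are
  exactly `s * r` and `s * l` with `r * l = s`. One of `r`, `l` is at most `a`, because `b` is the
  smallest divisor of `s` with `s ≤ b * b`, and that edge gives the bound.
* Otherwise inconsistent vertices occur everywhere. Each of them forbids a pattern on three
  alternate vertices, which costs a factor `1 - 1 / s ^ 3`; if `n` is large, enough of these
  patterns are disjoint to save a factor `s`.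

Conversely, splitting a colour into a part of size `a` and a part of size `b` and labelling the
edges by sums of such parts gives a proper colouring with `b * s ^ k` colours.
-/

open Finset

/-- The confusion graph `𝔠_s(C_n)`: vertices are the colourings `Z_s^n` of the cycle
`C_n`, and two colourings `c, c'` are adjacent iff there is an index `i` (modulo `n`)
with `c i ≠ c' i` but `c (i-1) = c' (i-1)` and `c (i+1) = c' (i+1)`. -/
def confusionGraph (n s : ℕ) [NeZero n] : SimpleGraph (ZMod n → Fin s) where
  Adj c c' := ∃ i : ZMod n,
    c i ≠ c' i ∧ c (i - 1) = c' (i - 1) ∧ c (i + 1) = c' (i + 1)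
  symm := by
    constructor
    rintro c c' ⟨i, h1, h2, h3⟩
    exact ⟨i, h1.symm, h2.symm, h3.symm⟩
  loopless := by
    constructor
    rintro c ⟨i, h1, -, -⟩
    exact h1 rfl

lemma card_le_indepNum_mul_of_colorable {V : Type*} [Fintype V] {G : SimpleGraph V} {q : ℕ}
    (hG : G.Colorable q) : Fintype.card V ≤ G.indepNum * q := by
  classical
  obtain ⟨C⟩ := hG
  have h_class (x : Fin q) : #{v | C v = x} ≤ G.indepNum := by
    refine SimpleGraph.IsIndepSet.card_le_indepNum ?_
    rw [coe_filter_univ]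
    exact C.isIndepSet_colorClass x
  simpa using card_le_mul_card_image_of_maps_to (s := univ) (t := univ) (f := C)
    (fun _ _ ↦ mem_univ _) _ (fun x _ ↦ h_class x)

lemma card_forall_block_ne_mul_le {ι κ β α : Type*} [Finite ι] [Finite κ] [Finite β] [Finite α]
    (block : κ × β ↪ ι) (pat : κ → β → α) :
    Nat.card {w : ι → α // ∀ j, (fun x ↦ w (block (j, x))) ≠ pat j} *
        (Nat.card α ^ Nat.card β) ^ Nat.card κ ≤
      (Nat.card α ^ Nat.card β - 1) ^ Nat.card κ * Nat.card α ^ Nat.card ι := by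
  classical
  have := Fintype.ofFinite κ
  have := Fintype.ofFinite β
  have := Fintype.ofFinite α
  let Φ (p : {w : ι → α // ∀ j, (fun x ↦ w (block (j, x))) ≠ pat j} × (κ × β → α)) :
      (∀ j, {v : β → α // v ≠ pat j}) × (ι → α) :=
    (fun j ↦ ⟨fun x ↦ p.1.1 (block (j, x)), p.1.2 j⟩, Function.extend block p.2 p.1.1)
  have hΦ : Function.Injective Φ := by
    rintro ⟨⟨w, hw⟩, u⟩ ⟨⟨w', hw'⟩, u'⟩ h
    simp only [Φ, Prod.mk.injEq, funext_iff, Subtype.mk.injEq] at h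
    obtain ⟨h_block, h_extend⟩ := h
    have hu : u = u' := funext fun x ↦ by
      simpa only [block.injective.extend_apply] using h_extend (block x)
    have hw : w = w' := funext fun i ↦ by
      by_cases hi : ∃ x, block x = i
      · obtain ⟨⟨j, x⟩, rfl⟩ := hi
        exact h_block j x
      · simpa only [Function.extend_apply' _ _ _ hi] using h_extend i
    subst hu hw
    rfl
  have h_ne (v : β → α) : Nat.card {v' // v' ≠ v} = Nat.card α ^ Nat.card β - 1 := by simp
  simpa [Nat.card_prod, Nat.card_pi, Nat.card_fun, h_ne, pow_mul'] using
    Nat.card_le_card_of_injective Φ hΦ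

lemma eventually_pred_pow_mul_le_pow {x : ℕ} (hx : 0 < x) (y : ℕ) :
    ∀ᶠ t in Filter.atTop, (x - 1) ^ t * y ≤ x ^ t := by
  have h_lt : ((x - 1 : ℕ) : ℝ) < x := by exact_mod_cast Nat.sub_one_lt_of_lt hx
  have h_bound := (isLittleO_pow_pow_of_lt_left (Nat.cast_nonneg _) h_lt).bound
    (c := 1 / (y + 1)) (by positivity)
  filter_upwards [h_bound] with t ht
  simp only [norm_pow, RCLike.norm_natCast] at ht
  rw [div_mul_eq_mul_div, one_mul, le_div_iff₀ (by positivity)] at ht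
  have : (x - 1) ^ t * (y + 1) ≤ x ^ t := by exact_mod_cast ht
  exact (Nat.mul_le_mul_left _ y.le_succ).trans this

lemma exists_separated_of_forall_window {P : ℕ → Prop} (hP : ∀ i, ∃ d < 8, P (i + d)) (t : ℕ) :
    ∃ (e : ℕ) (J : Finset ℕ), t ≤ #J ∧ (∀ m ∈ J, m + 2 < 12 * t) ∧
      (J : Set ℕ).Pairwise (fun m m' ↦ m + 3 ≤ m' ∨ m' + 3 ≤ m) ∧ ∀ m ∈ J, P (e + 2 * m) := by
  -- one position in each block of length 12, in its first 8 places, so that the halves of positions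
  -- from different blocks differ by at least 3
  choose d hd hPd using fun q ↦ hP (12 * q)
  let p (q : ℕ) := 12 * q + d q
  obtain ⟨e, -, he⟩ := exists_le_card_fiber_of_mul_le_card_of_maps_to
    (s := range (2 * t)) (t := range 2) (f := fun q ↦ p q % 2) (n := t)
    (fun q _ ↦ mem_range.2 (Nat.mod_lt _ two_pos)) (by simp) (by simp)
  have h_half (q : ℕ) : 6 * q ≤ p q / 2 ∧ p q / 2 ≤ 6 * q + 3 := by
    have := hd q
    lia
  refine ⟨e, {q ∈ range (2 * t) | p q % 2 = e}.image (fun q ↦ p q / 2), ?_, ?_, ?_, ?_⟩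
  · rwa [card_image_of_injective]
    intro q q' h
    have := h_half q
    have := h_half q'
    lia
  · simp only [mem_image, mem_filter, mem_range, forall_exists_index, and_imp]
    rintro _ q hq - rfl
    have := h_half q
    lia
  · intro m hm m' hm' hne
    obtain ⟨q, -, rfl⟩ := mem_image.1 hm
    obtain ⟨q', -, rfl⟩ := mem_image.1 hm'
    have hqq : q ≠ q' := fun h ↦ hne (by rw [h])
    have := h_half q
    have := h_half q'
    lia
  · simp only [mem_image, mem_filter, forall_exists_index, and_imp]
    rintro _ q - rfl rfl
    rw [Nat.mod_add_div]
    exact hPd q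

lemma le_or_le_of_mul_eq {s a b r l : ℕ} (hs : 0 < s) (hab : a * b = s)
    (hmin : ∀ d, d ∣ s → s ≤ d * d → b ≤ d) (hrl : r * l = s) : r ≤ a ∨ l ≤ a := by
  have h_cofactor {x y : ℕ} (hxy : x * y = s) (hle : x ≤ y) : x ≤ a := by
    have hby : b ≤ y := hmin y ⟨x, by rw [← hxy, mul_comm]⟩ (hxy ▸ Nat.mul_le_mul_right y hle)
    have hb : 0 < b := Nat.pos_of_mul_pos_left (hab ▸ hs)
    exact Nat.le_of_mul_le_mul_right ((Nat.mul_le_mul_left x hby).trans (hxy.trans hab.symm).le) hb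
  exact (le_total r l).imp (h_cofactor hrl) (h_cofactor (mul_comm l r ▸ hrl))

section Strategy

variable {α : Type*} {k : ℕ}

/-- The colourings of the cycle `C_n`, unrolled to `n`-periodic sequences, on which all vertices
guess their own colour correctly when vertex `i + 1` guesses `f i x z` upon seeing the colours `x`
and `z` of the vertices `i` and `i + 2`. -/
def winningColourings (n : ℕ) (f : ℕ → α → α → α) : Set (ℕ → α) :=
  {c | Function.Periodic c n ∧ ∀ i, f i (c i) (c (i + 2)) = c (i + 1)}

/-- The guess of vertex `i + 2` returns its actual colour `y` whenever both its neighbours have the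
colours guessed by `f`, whatever the colours `x` and `z` of the vertices `i` and `i + 4`. -/
def IsConsistentAt (f : ℕ → α → α → α) (i : ℕ) : Prop :=
  ∀ x y z, f (i + 1) (f i x y) (f (i + 2) y z) = y

/-- The pairs of colours that the vertices `i` and `i + 1` can have when vertex `i + 1` guesses
correctly. -/
def attainablePairs (f : ℕ → α → α → α) (i : ℕ) : Set (α × α) :=
  {p | p.2 ∈ Set.range (f i p.1)}

variable {f : ℕ → α → α → α}

lemma winningColourings.injective_alternating (f : ℕ → α → α → α) (e : ℕ) : Function.Injective
    fun (c : winningColourings (2 * k + 1) f) (m : Fin (k + 1)) ↦ c.1 (e + 2 * m) := by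
  rintro ⟨c, hc, hcf⟩ ⟨c', hc', hcf'⟩ h
  have h_even (m : ℕ) (hm : m ≤ k) : c (e + 2 * m) = c' (e + 2 * m) :=
    congrFun h ⟨m, Nat.lt_succ_of_le hm⟩
  have h_period (t : ℕ) (ht : t < 2 * k + 1) : c (e + t) = c' (e + t) := by
    obtain ⟨m, rfl | rfl⟩ := t.even_or_odd'
    · exact h_even m (by lia)
    · rw [← add_assoc, ← hcf, ← hcf', h_even m (by lia), add_assoc, ← mul_add_one,
        h_even (m + 1) (by lia)]
  refine Subtype.ext (funext fun i ↦ ?_)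
  -- every `i` is congruent to some `e + t` with `0 ≤ t < 2 * k + 1`
  have h_shift : i + e * (2 * k + 1) = e + (i + e * (2 * k)) := by ring
  calc c i = c (e + (i + e * (2 * k)) % (2 * k + 1)) := by
        rw [(hc.const_add e).map_mod_nat, ← h_shift]
        exact (hc.nat_mul e i).symm
    _ = c' (e + (i + e * (2 * k)) % (2 * k + 1)) := h_period _ (Nat.mod_lt _ (Nat.succ_pos _))
    _ = c' i := by
        rw [(hc'.const_add e).map_mod_nat, ← h_shift]
        exact hc'.nat_mul e i

instance winningColourings.finite [Finite α] : Finite (winningColourings (2 * k + 1) f) :=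
  .of_injective _ (winningColourings.injective_alternating f 0)

lemma card_winningColourings_le_attainablePairs [Finite α] (f : ℕ → α → α → α) (i : ℕ) :
    Nat.card (winningColourings (2 * (k + 1) + 1) f) ≤
      Nat.card (attainablePairs f i) * Nat.card α ^ k := by
  let Φ (c : winningColourings (2 * (k + 1) + 1) f) : attainablePairs f i × (Fin k → α) :=
    (⟨(c.1 i, c.1 (i + 1)), c.1 (i + 2), c.2.2 i⟩, fun m ↦ c.1 (i + 1 + 2 * (m + 1)))
  have hΦ : Function.Injective Φ := by
    intro c c' h
    obtain ⟨h_pair, h_rest⟩ := Prod.mk.inj h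
    obtain ⟨h_left, h_right⟩ := Prod.mk.inj (congrArg Subtype.val h_pair)
    have h_last : i + 1 + 2 * (k + 1) = i + (2 * (k + 1) + 1) := by ring
    refine winningColourings.injective_alternating f (i + 1) (funext fun m ↦ ?_)
    cases m using Fin.cases with
    | zero => exact h_right
    | succ m =>
      cases m using Fin.lastCases with
      | last => simpa [h_last, c.2.1 i, c'.2.1 i] using h_left
      | cast m => exact congrFun h_rest m
  simpa [Nat.card_prod, Nat.card_fun] using Nat.card_le_card_of_injective Φ hΦ

/-- If consistency fails at `e + 2 * m`, then some three colours do not occur together at the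
positions `e + 2 * m`, `e + 2 * m + 2`, `e + 2 * m + 4`. -/
lemma card_winningColourings_mul_le [Finite α] {J : Finset ℕ} {e : ℕ}
    (hJ : ∀ m ∈ J, m + 2 ≤ k)
    (h_sep : (J : Set ℕ).Pairwise fun m m' ↦ m + 3 ≤ m' ∨ m' + 3 ≤ m)
    (h_bad : ∀ m ∈ J, ¬ IsConsistentAt f (e + 2 * m)) :
    Nat.card (winningColourings (2 * k + 1) f) * (Nat.card α ^ 3) ^ #J ≤
      (Nat.card α ^ 3 - 1) ^ #J * Nat.card α ^ (k + 1) := by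
  simp only [IsConsistentAt, not_forall] at h_bad
  choose x y z h_bad using h_bad
  let pat (m : J) : Fin 3 → α := ![x m m.2, y m m.2, z m m.2]
  let block : J × Fin 3 ↪ Fin (k + 1) :=
    { toFun p := ⟨p.1 + p.2, by have := hJ p.1 p.1.2; lia⟩
      inj' := by
        rintro ⟨m, u⟩ ⟨m', u'⟩ h
        have h_val : (m : ℕ) + u = m' + u' := congrArg Fin.val h
        have hm : m = m' := by
          by_contra hne
          have := h_sep m.2 m'.2 (Subtype.coe_ne_coe.2 hne)
          lia
        subst hm
        simpa [Fin.ext_iff] using h_val }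
  have h_avoid (c : winningColourings (2 * k + 1) f) (m : J) :
      (fun u ↦ c.1 (e + 2 * (block (m, u) : ℕ))) ≠ pat m := by
    intro h
    have hx : c.1 (e + 2 * m) = x m m.2 := congrFun h 0
    have hy : c.1 (e + 2 * m + 2) = y m m.2 := congrFun h 1
    have hz : c.1 (e + 2 * m + 4) = z m m.2 := congrFun h 2
    apply h_bad m m.2
    rw [← hx, ← hy, ← hz, c.2.2 (e + 2 * m), c.2.2 (e + 2 * m + 2)]
    exact c.2.2 (e + 2 * m + 1)
  have h_le : Nat.card (winningColourings (2 * k + 1) f) ≤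
      Nat.card {w : Fin (k + 1) → α // ∀ m, (fun u ↦ w (block (m, u))) ≠ pat m} :=
    Nat.card_le_card_of_injective (fun c ↦ ⟨fun m ↦ c.1 (e + 2 * m), h_avoid c⟩)
      fun c c' h ↦ winningColourings.injective_alternating f e (congrArg Subtype.val h)
  refine (Nat.mul_le_mul_right _ h_le).trans ?_
  simpa using card_forall_block_ne_mul_le block pat

lemma card_range_mul_card_attainablePairs {i : ℕ}
    (h : ∀ j < 5, IsConsistentAt f (i + j)) (p : α) :
    Nat.card (Set.range (f (i + 2) p)) * Nat.card (attainablePairs f (i + 5)) =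
      Nat.card α ^ 2 := by
  have h₁ : ∀ x y z, f (i + 1) (f i x y) (f (i + 2) y z) = y := h 0 (by simp)
  have h₂ : ∀ x y z, f (i + 2) (f (i + 1) x y) (f (i + 3) y z) = y := h 1 (by simp)
  have h₃ : ∀ x y z, f (i + 3) (f (i + 2) x y) (f (i + 4) y z) = y := h 2 (by simp)
  have h₄ : ∀ x y z, f (i + 4) (f (i + 3) x y) (f (i + 5) y z) = y := h 3 (by simp)
  have h₅ : ∀ x y z, f (i + 5) (f (i + 4) x y) (f (i + 6) y z) = y := h 4 (by simp)
  rw [sq, ← Nat.card_prod, ← Nat.card_prod]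
  exact (Nat.card_congr
    { toFun c := (⟨f (i + 2) p c.1, c.1, rfl⟩,
        ⟨(f (i + 4) c.1 c.2, c.2), f (i + 6) c.2 p, h₅ _ _ _⟩)
      invFun d := (f (i + 3) d.1.1 d.2.1.1, d.2.1.2)
      left_inv c := by simp only [h₃]
      right_inv := by
        rintro ⟨⟨_, z, rfl⟩, ⟨⟨v, y⟩, w, hw : f (i + 5) v w = y⟩⟩
        have h_left : f (i + 2) p (f (i + 3) (f (i + 2) p z) v) = f (i + 2) p z := by
          simpa only [h₁] using h₂ (f i p p) (f (i + 2) p z) v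
        have h_right : f (i + 4) (f (i + 3) (f (i + 2) p z) v) y = v := by
          simpa only [hw] using h₄ (f (i + 2) p z) v w
        simp only [h_left, h_right] }).symm

lemma exists_card_attainablePairs_eq [Finite α] [Nonempty α] {i : ℕ}
    (h : ∀ j < 5, IsConsistentAt f (i + j)) :
    ∃ r, Nat.card (attainablePairs f (i + 2)) = Nat.card α * r ∧
      r * Nat.card (attainablePairs f (i + 5)) = Nat.card α ^ 2 := by
  have := Fintype.ofFinite α
  let p₀ : α := Classical.arbitrary α
  have h_prod := card_range_mul_card_attainablePairs h
  have h_pos : 0 < Nat.card (attainablePairs f (i + 5)) :=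
    Nat.pos_of_mul_pos_left ((h_prod p₀).symm ▸ pow_pos Nat.card_pos 2)
  have h_const (p : α) :
      Nat.card (Set.range (f (i + 2) p)) = Nat.card (Set.range (f (i + 2) p₀)) :=
    Nat.eq_of_mul_eq_mul_right h_pos ((h_prod p).trans (h_prod p₀).symm)
  refine ⟨Nat.card (Set.range (f (i + 2) p₀)), ?_, h_prod p₀⟩
  calc Nat.card (attainablePairs f (i + 2))
      = ∑ p, Nat.card (Set.range (f (i + 2) p)) := by
        rw [Nat.card_congr (Equiv.setProdEquivSigma _), Nat.card_sigma]
        rfl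
    _ = Nat.card α * Nat.card (Set.range (f (i + 2) p₀)) := by simp [h_const]

lemma exists_mul_eq_card_of_isConsistentAt [Finite α] [Nonempty α] {i : ℕ}
    (h : ∀ j < 8, IsConsistentAt f (i + j)) :
    ∃ r l, r * l = Nat.card α ∧ Nat.card (attainablePairs f (i + 2)) = Nat.card α * r ∧
      Nat.card (attainablePairs f (i + 5)) = Nat.card α * l := by
  obtain ⟨r, hr, hrl⟩ := exists_card_attainablePairs_eq (i := i) fun j hj ↦ h j (by lia)
  obtain ⟨l, hl, -⟩ := exists_card_attainablePairs_eq (i := i + 3) fun j hj ↦ by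
    simpa only [add_assoc] using h (3 + j) (by lia)
  refine ⟨r, l, ?_, hr, hl⟩
  refine Nat.eq_of_mul_eq_mul_left (Nat.card_pos (α := α)) ?_
  calc Nat.card α * (r * l) = r * (Nat.card α * l) := by ring
    _ = Nat.card α * Nat.card α := by rw [← sq, ← hrl, ← hl]

variable {a b : ℕ}

lemma card_winningColourings_le_of_isConsistentAt [Finite α] [Nonempty α]
    (hab : a * b = Nat.card α)
    (hmin : ∀ d, d ∣ Nat.card α → Nat.card α ≤ d * d → b ≤ d) {i : ℕ}
    (h : ∀ j < 8, IsConsistentAt f (i + j)) :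
    Nat.card (winningColourings (2 * (k + 1) + 1) f) ≤ a * Nat.card α ^ (k + 1) := by
  obtain ⟨r, l, hrl, hr, hl⟩ := exists_mul_eq_card_of_isConsistentAt h
  have h_bound {x j : ℕ} (hj : Nat.card (attainablePairs f j) = Nat.card α * x) (hx : x ≤ a) :
      Nat.card (winningColourings (2 * (k + 1) + 1) f) ≤ a * Nat.card α ^ (k + 1) :=
    calc Nat.card (winningColourings (2 * (k + 1) + 1) f)
      _ ≤ Nat.card (attainablePairs f j) * Nat.card α ^ k :=
        card_winningColourings_le_attainablePairs f j
      _ = x * Nat.card α ^ (k + 1) := by rw [hj]; ring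
      _ ≤ a * Nat.card α ^ (k + 1) := Nat.mul_le_mul_right _ hx
  exact (le_or_le_of_mul_eq Nat.card_pos hab hmin hrl).elim (h_bound hr) (h_bound hl)

lemma card_winningColourings_le_of_not_isConsistentAt [Finite α] [Nonempty α] {t : ℕ}
    (ht : ∀ t' ≥ t, (Nat.card α ^ 3 - 1) ^ t' * Nat.card α ≤ (Nat.card α ^ 3) ^ t')
    (htk : 12 * t ≤ k) (h : ∀ i, ∃ j < 8, ¬ IsConsistentAt f (i + j)) :
    Nat.card (winningColourings (2 * k + 1) f) ≤ Nat.card α ^ k := by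
  obtain ⟨e, J, hJt, hJ, h_sep, h_bad⟩ := exists_separated_of_forall_window
    (P := fun i ↦ ¬ IsConsistentAt f i) h t
  have h_count := card_winningColourings_mul_le (k := k) (fun m hm ↦ by have := hJ m hm; lia)
    h_sep h_bad
  refine Nat.le_of_mul_le_mul_right ?_ (pow_pos (pow_pos (Nat.card_pos (α := α)) 3) #J)
  calc Nat.card (winningColourings (2 * k + 1) f) * (Nat.card α ^ 3) ^ #J
    _ ≤ (Nat.card α ^ 3 - 1) ^ #J * Nat.card α ^ (k + 1) := h_count
    _ = Nat.card α ^ k * ((Nat.card α ^ 3 - 1) ^ #J * Nat.card α) := by ring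
    _ ≤ Nat.card α ^ k * (Nat.card α ^ 3) ^ #J := Nat.mul_le_mul_left _ (ht _ hJt)

end Strategy

section ConfusionGraph

variable {n k s a b : ℕ}

lemma exists_strategy_of_isIndepSet [NeZero n] {F : Set (ZMod n → Fin s)}
    (hF : (confusionGraph n s).IsIndepSet F) :
    ∃ f : ℕ → Fin s → Fin s → Fin s, ∀ c ∈ F, (fun i : ℕ ↦ c i) ∈ winningColourings n f := by
  have h_guess (i : ℕ) (x z : Fin s) :
      ∃ y, ∀ c ∈ F, c i = x → c (i + 2 : ℕ) = z → c (i + 1 : ℕ) = y := by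
    by_cases h : ∃ c ∈ F, c i = x ∧ c (i + 2 : ℕ) = z
    · obtain ⟨c, hc, rfl, rfl⟩ := h
      refine ⟨c (i + 1 : ℕ), fun c' hc' hx hz ↦ ?_⟩
      by_contra hne
      refine hF hc' hc (fun h ↦ hne (by rw [h])) ⟨(i + 1 : ℕ), hne, ?_, ?_⟩
      · simpa using hx
      · simpa [add_assoc, one_add_one_eq_two] using hz
    · exact ⟨x, fun c hc hx hz ↦ absurd ⟨c, hc, hx, hz⟩ h⟩
  choose f hf using h_guess
  refine ⟨f, fun c hc ↦ ⟨fun i ↦ by simp, fun i ↦ (hf i _ _ c hc rfl rfl).symm⟩⟩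

variable (k s) in
lemma exists_indepNum_le_card_winningColourings :
    ∃ f, (confusionGraph (2 * k + 1) s).indepNum ≤
      Nat.card (winningColourings (α := Fin s) (2 * k + 1) f) := by
  obtain ⟨F, hF⟩ := (confusionGraph (2 * k + 1) s).exists_isNIndepSet_indepNum
  obtain ⟨f, hf⟩ := exists_strategy_of_isIndepSet hF.isIndepSet
  refine ⟨f, ?_⟩
  rw [← hF.card_eq, ← Nat.card_eq_finsetCard]
  refine Nat.card_le_card_of_injective (fun c : F ↦ ⟨_, hf c c.2⟩) fun c c' h ↦ Subtype.ext ?_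
  exact ZMod.natCast_zmod_surjective.injective_comp_right (congrArg Subtype.val h)

lemma eventually_indepNum_confusionGraph_le (hs : 0 < s) (hab : a * b = s)
    (hmin : ∀ d, d ∣ s → s ≤ d * d → b ≤ d) :
    ∀ᶠ k in Filter.atTop, (confusionGraph (2 * k + 1) s).indepNum ≤ a * s ^ k := by
  have : NeZero s := ⟨hs.ne'⟩
  have ha : 0 < a := Nat.pos_of_mul_pos_right (hab ▸ hs)
  obtain ⟨t, ht⟩ := Filter.eventually_atTop.1 (eventually_pred_pow_mul_le_pow (pow_pos hs 3) s)
  filter_upwards [Filter.eventually_ge_atTop (12 * t), Filter.eventually_ge_atTop 1] with k htk hk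
  obtain ⟨k, rfl⟩ := Nat.exists_eq_add_of_le' hk
  obtain ⟨f, hf⟩ := exists_indepNum_le_card_winningColourings (k + 1) s
  refine hf.trans ?_
  by_cases h : ∃ i, ∀ j < 8, IsConsistentAt f (i + j)
  · obtain ⟨i, hi⟩ := h
    simpa using card_winningColourings_le_of_isConsistentAt (by simpa using hab)
      (by simpa using hmin) hi
  · push Not at h
    calc Nat.card (winningColourings (2 * (k + 1) + 1) f)
      _ ≤ s ^ (k + 1) := by
        simpa using card_winningColourings_le_of_not_isConsistentAt (by simpa using ht) htk h
      _ ≤ a * s ^ (k + 1) := Nat.le_mul_of_pos_left _ ha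

lemma eq_zero_or_exists_eq_two_mul_add (i : ZMod (2 * k + 1)) :
    i = 0 ∨ ∃ m : Fin k, i = 2 * (m : ℕ) + 1 ∨ i = 2 * (m : ℕ) + 2 := by
  obtain ⟨t, ht, rfl⟩ : ∃ t < 2 * k + 1, (t : ZMod (2 * k + 1)) = i :=
    ⟨i.val, i.val_lt, i.natCast_zmod_val⟩
  obtain ⟨m, rfl | rfl⟩ := t.even_or_odd'
  · cases m with
    | zero => simp
    | succ m => exact .inr ⟨⟨m, by lia⟩, .inr (by push_cast; ring)⟩
  · exact .inr ⟨⟨m, by lia⟩, .inl (by push_cast; ring)⟩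

/-- The colours of `C_{2k+1}` are split into coordinates `u` and `v`, and each edge is labelled by a
sum of one coordinate of each of its ends: the edge from `2m + 1` to `2m + 2` by a sum of
`u`-coordinates, the edge from `2m` to `2m + 1` by a sum of `v`-coordinates, except that the edge
from `2k` to `2k + 1 = 0` uses the `u`-coordinate of `0`, embedded by `g`. -/
def edgeSums {α A B : Type*} [Add A] [Add B] (u : α → A) (v : α → B) (g : A → B)
    (c : ZMod (2 * k + 1) → α) : (Fin (k + 1) → B) × (Fin k → A) :=
  (fun m ↦ v (c (2 * (m : ℕ))) + (if m = Fin.last k then g ∘ u else v) (c (2 * (m : ℕ) + 1)),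
    fun m ↦ u (c (2 * (m : ℕ) + 1)) + u (c (2 * (m : ℕ) + 2)))

lemma edgeSums_ne_of_adj {A B : Type*} [Add A] [IsCancelAdd A] [Add B] [IsCancelAdd B]
    {u : Fin s → A} {v : Fin s → B} {g : A → B} (huv : Function.Injective fun x ↦ (u x, v x))
    (hg : Function.Injective g) {c c' : ZMod (2 * k + 1) → Fin s}
    (h : (confusionGraph (2 * k + 1) s).Adj c c') : edgeSums u v g c ≠ edgeSums u v g c' := by
  obtain ⟨i, hne, h_left, h_right⟩ := h
  intro h_sums
  have hB := congrFun (congrArg Prod.fst h_sums)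
  have hA := congrFun (congrArg Prod.snd h_sums)
  simp only [edgeSums] at hA hB
  refine hne (huv ?_)
  obtain rfl | ⟨m, rfl | rfl⟩ := eq_zero_or_exists_eq_two_mul_add i
  · have h_closing : (2 * k + 1 : ZMod (2 * k + 1)) = 0 := by
      exact_mod_cast ZMod.natCast_self (2 * k + 1)
    rw [zero_sub, ← eq_neg_of_add_eq_zero_left h_closing] at h_left
    rw [zero_add] at h_right
    have hu : u (c 0) = u (c' 0) := hg <| by
      simpa [h_left, h_closing] using hB (Fin.last k)
    have hv : v (c 0) = v (c' 0) := by simpa [h_right] using hB 0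
    exact Prod.ext hu hv
  · rw [add_sub_cancel_right] at h_left
    rw [add_assoc, one_add_one_eq_two] at h_right
    have hu : u (c (2 * (m : ℕ) + 1)) = u (c' (2 * (m : ℕ) + 1)) := by
      simpa [h_right] using hA m
    have hv : v (c (2 * (m : ℕ) + 1)) = v (c' (2 * (m : ℕ) + 1)) := by
      simpa [h_left, m.castSucc_ne_last] using hB m.castSucc
    exact Prod.ext hu hv
  · have h_prev : (2 * (m : ℕ) + 2 - 1 : ZMod (2 * k + 1)) = 2 * (m : ℕ) + 1 := by ring
    rw [h_prev] at h_left
    have hu : u (c (2 * (m : ℕ) + 2)) = u (c' (2 * (m : ℕ) + 2)) := by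
      simpa [h_left] using hA m
    have hv : v (c (2 * (m : ℕ) + 2)) = v (c' (2 * (m : ℕ) + 2)) := by
      simpa [mul_add, h_right] using hB m.succ
    exact Prod.ext hu hv

lemma colorable_confusionGraph (hs : 0 < s) (hab : a * b = s) (hle : a ≤ b) :
    (confusionGraph (2 * k + 1) s).Colorable (b * s ^ k) := by
  subst hab
  have : NeZero a := ⟨(Nat.pos_of_mul_pos_right hs).ne'⟩
  have : NeZero b := ⟨(Nat.pos_of_mul_pos_left hs).ne'⟩
  let φ : Fin (a * b) ≃ ZMod a × ZMod b := Fintype.equivOfCardEq (by simp [ZMod.card])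
  obtain ⟨g⟩ : Nonempty (ZMod a ↪ ZMod b) :=
    Function.Embedding.nonempty_of_card_le (by simpa [ZMod.card] using hle)
  have h_card : Fintype.card ((Fin (k + 1) → ZMod b) × (Fin k → ZMod a)) = b * (a * b) ^ k := by
    simp only [Fintype.card_prod, Fintype.card_fun, ZMod.card, Fintype.card_fin]
    ring
  rw [← h_card]
  exact (SimpleGraph.Coloring.mk (edgeSums (fun x ↦ (φ x).1) (fun x ↦ (φ x).2) g)
    (edgeSums_ne_of_adj φ.injective g.injective)).colorable

end ConfusionGraph

/-- For every integer `s ≥ 2`, let `b` be the smallest divisor of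
`s` with `b ≥ √s`.  There is an `N` such that for every odd `n > N` (with `n ≥ 3`),
the chromatic number of the confusion graph `𝔠_s(C_n)` equals `b · s^{(n-1)/2}`
(equivalently, the information defect satisfies `β(C_n,s) = (n-1)/2 + log_s b`). -/
theorem cycle_guessing_stmt19 (s b : ℕ) (hs : 2 ≤ s)
    (hb : b ∣ s ∧ s ≤ b * b ∧ ∀ d : ℕ, d ∣ s → s ≤ d * d → b ≤ d) :
    ∃ N : ℕ, ∀ (n : ℕ) [NeZero n], N < n → Odd n → 3 ≤ n →
      (confusionGraph n s).chromaticNumber = (b * s ^ ((n - 1) / 2) : ℕ) := by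
  obtain ⟨⟨a, hab⟩, hsb, hmin⟩ := hb
  rw [mul_comm] at hab
  subst hab
  have hpos : 0 < a * b := by lia
  have hb : 0 < b := Nat.pos_of_mul_pos_left hpos
  have hle : a ≤ b := Nat.le_of_mul_le_mul_right hsb hb
  obtain ⟨K, hK⟩ := Filter.eventually_atTop.1 (eventually_indepNum_confusionGraph_le hpos rfl hmin)
  refine ⟨2 * K, fun n _ hn hodd _ ↦ ?_⟩
  obtain ⟨k, rfl⟩ := hodd
  rw [show (2 * k + 1 - 1) / 2 = k by lia]
  refine le_antisymm (colorable_confusionGraph hpos rfl hle).chromaticNumber_le ?_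
  refine SimpleGraph.le_chromaticNumber_iff_colorable.2 fun q hq ↦ ?_
  refine Nat.le_of_mul_le_mul_left ?_ (Nat.mul_pos (Nat.pos_of_mul_pos_right hpos) (pow_pos hpos k))
  calc a * (a * b) ^ k * (b * (a * b) ^ k)
    _ = Fintype.card (ZMod (2 * k + 1) → Fin (a * b)) := by
      rw [Fintype.card_fun, ZMod.card, Fintype.card_fin]; ring
    _ ≤ (confusionGraph (2 * k + 1) (a * b)).indepNum * q := card_le_indepNum_mul_of_colorable hq
    _ ≤ a * (a * b) ^ k * q := Nat.mul_le_mul_right q (hK k (by lia))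
end
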